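/- arXiv:1104.3745 — 9 statements merged into one kernel-verified Lean document; each statement's English description precedes it below -/
import Mathlib

section
/- Let n ≥ 2, Ω = ℝⁿ \ {0}, and y ∈ Ω. Then the quasihyperbolic ball B_k(y,r) is close-to-convex for every r ∈ (0, λ], where λ ≈ 2.97169 is the solution p ∈ (2, π) of cos√(p²−1) + √(p²−1)·sin√(p²−1) = 0. -/
open Set Metric MeasureTheory

noncomputable section

variable {E : Type*} [NormedAddCommGroup E] [NormedSpace ℝ E]

/-- The quasihyperbolic length of a path `γ` (parametrized on `[0,1]`) in the
domain `Ω`: the integral of `‖γ'(t)‖ / d(γ(t), ∂Ω)`. -/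
def qhLength (Ω : Set E) (γ : ℝ → E) : ℝ :=
  ∫ t in (0:ℝ)..1, ‖deriv γ t‖ / infDist (γ t) (frontier Ω)

/-- A rectifiable curve in `Ω` joining `x` and `y`, formalized as a map on `[0,1]`
which is Lipschitz on `[0,1]` (every rectifiable curve admits such a
parametrization), takes values in `Ω`, and joins `x` to `y`. -/
def IsRectPath (Ω : Set E) (x y : E) (γ : ℝ → E) : Prop :=
  (∃ K : NNReal, LipschitzOnWith K γ (Icc 0 1)) ∧
    MapsTo γ (Icc 0 1) Ω ∧ γ 0 = x ∧ γ 1 = y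

/-- The quasihyperbolic metric on `Ω`. -/
def qhDist (Ω : Set E) (x y : E) : ℝ :=
  sInf (qhLength Ω '' {γ | IsRectPath Ω x y γ})

/-- The quasihyperbolic ball. -/
def qhBall (Ω : Set E) (x : E) (r : ℝ) : Set E :=
  {y ∈ Ω | qhDist Ω x y < r}

/-- The distance ratio metric (`j`-metric) on `Ω`. -/
def jDist (Ω : Set E) (x y : E) : ℝ :=
  Real.log (1 + dist x y / min (infDist x (frontier Ω)) (infDist y (frontier Ω)))

/-- The `j`-metric ball. -/
def jBall (Ω : Set E) (x : E) (r : ℝ) : Set E :=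
  {y ∈ Ω | jDist Ω x y < r}

/-- `G` is strictly starlike with respect to `x`: it is starlike with respect to `x`
and every half-line emanating from `x` meets `∂G` at exactly one point. -/
def StrictlyStarlike (G : Set E) (x : E) : Prop :=
  StarConvex ℝ x G ∧
    ∀ v : E, v ≠ 0 → ∃! p : E, p ∈ frontier G ∧ ∃ t : ℝ, 0 < t ∧ p = x + t • v

/-- `G` is strictly convex: it is strictly starlike with respect to each of its points. -/
def StrictlyConvexSet (G : Set E) : Prop :=
  ∀ x ∈ G, StrictlyStarlike G x

/-- A half-line: `{t • v + z : t > 0}` or `{t • v + z : t ≥ 0}` with `v ≠ 0`. -/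
def IsHalfline (L : Set E) : Prop :=
  ∃ z v : E, v ≠ 0 ∧
    (L = {p | ∃ t : ℝ, 0 < t ∧ p = t • v + z} ∨
      L = {p | ∃ t : ℝ, 0 ≤ t ∧ p = t • v + z})

/-- `G` is close-to-convex: its complement can be covered with pairwise
non-intersecting half-lines. -/
def CloseToConvex (G : Set E) : Prop :=
  ∃ 𝒮 : Set (Set E), (∀ L ∈ 𝒮, IsHalfline L) ∧ 𝒮.PairwiseDisjoint id ∧ Gᶜ = ⋃₀ 𝒮

end


lemma lam_bound (lam : ℝ) (h : lam ∈ Ioo 2 Real.pi)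
    (heq : Real.cos (Real.sqrt (lam ^ 2 - 1)) +
        Real.sqrt (lam ^ 2 - 1) * Real.sin (Real.sqrt (lam ^ 2 - 1)) = 0)
    (r : ℝ) (hr : r ≤ lam) (u : ℝ) (hu : u ∈ Icc 0 (Real.pi / 2)) :
    r * Real.sin u - u ≤ Real.pi / 2 := by
  obtain ⟨h1, h2⟩ := h
  set p := Real.sqrt (lam ^ 2 - 1) with hp
  have hp2 : p ^ 2 = lam ^ 2 - 1 := Real.sq_sqrt (by nlinarith)
  have hp0 : 0 ≤ p := Real.sqrt_nonneg _
  have hlp : 0 < lam := by linarith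
  have hinv : lam⁻¹ ≤ 1 := inv_le_one_of_one_le₀ (by linarith)
  have hinv0 : 0 < lam⁻¹ := by positivity
  set v := Real.arccos lam⁻¹ with hv
  have hcv : Real.cos v = lam⁻¹ := Real.cos_arccos (by linarith) hinv
  have hv0 : 0 ≤ v := Real.arccos_nonneg _
  have hv1 : v ≤ Real.pi / 2 := Real.arccos_le_pi_div_two.2 hinv0.le
  have hsv : Real.sin v = p * lam⁻¹ := by
    have : 0 ≤ Real.sin v := Real.sin_nonneg_of_nonneg_of_le_pi hv0 (by linarith)
    have h3 : Real.sin v ^ 2 = (p * lam⁻¹) ^ 2 := by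
      rw [Real.sin_sq, hcv, mul_pow, hp2]; field_simp
    exact (pow_left_inj₀ this (by positivity) two_ne_zero).1 h3
  have hc : Real.cos (p - v) = 0 := by
    rw [Real.cos_sub, hcv, hsv]
    have : Real.cos p * lam⁻¹ + Real.sin p * (p * lam⁻¹) = (Real.cos p + p * Real.sin p) * lam⁻¹ := by ring
    rw [this, heq, zero_mul]
  have hpl : p < Real.pi := by nlinarith
  have hpi := Real.pi_lt_d2
  have hpv : p - v = Real.pi / 2 := by
    have hp1 : 1.6 < p := by nlinarith
    apply Real.injOn_cos ⟨by linarith, by linarith⟩ ⟨by linarith, by linarith⟩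
    rw [hc, Real.cos_pi_div_two]
  have hsu : 0 ≤ Real.sin u := Real.sin_nonneg_of_nonneg_of_le_pi hu.1 (by linarith [hu.2])
  -- tangent inequality
  have key : Real.sin u ≤ Real.sin v + Real.cos v * (u - v) := by
    rcases lt_trichotomy u v with huv | huv | huv
    · obtain ⟨c, hc1, hc2⟩ := exists_deriv_eq_slope Real.sin huv Real.continuous_sin.continuousOn
        Real.differentiable_sin.differentiableOn
      rw [Real.deriv_sin, eq_div_iff (by linarith)] at hc2
      have := Real.cos_le_cos_of_nonneg_of_le_pi (x := c) (y := v) (by linarith [hu.1, hc1.1]) (by linarith) hc1.2.le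
      nlinarith
    · subst huv; simp
    · obtain ⟨c, hc1, hc2⟩ := exists_deriv_eq_slope Real.sin huv Real.continuous_sin.continuousOn
        Real.differentiable_sin.differentiableOn
      rw [Real.deriv_sin, eq_div_iff (by linarith)] at hc2
      have := Real.cos_le_cos_of_nonneg_of_le_pi (x := v) (y := c) hv0 (by linarith [hu.2, hc1.2]) hc1.1.le
      nlinarith
  have h5 : lam * Real.sin u ≤ p + (u - v) := by
    calc lam * Real.sin u ≤ lam * (Real.sin v + Real.cos v * (u - v)) := by gcongr
      _ = p + (u - v) := by rw [hsv, hcv]; field_simp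
  nlinarith

lemma phi_mono (r : ℝ) (hr : 0 < r)
    (hb : ∀ u ∈ Icc 0 (Real.pi / 2), r * Real.sin u - u ≤ Real.pi / 2) :
    MonotoneOn (fun u => Real.exp (-(r * Real.cos u)) * Real.sin (r * Real.sin u))
      (Icc 0 (Real.pi / 2)) := by
  have hd : ∀ u, HasDerivAt (fun u => Real.exp (-(r * Real.cos u)) * Real.sin (r * Real.sin u))
      (Real.exp (-(r * Real.cos u)) * (r * Real.cos (r * Real.sin u - u))) u := by
    intro u
    have h1 := (((Real.hasDerivAt_cos u).const_mul r).neg).exp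
    have h2 := ((Real.hasDerivAt_sin u).const_mul r).sin
    refine (h1.mul h2).congr_deriv ?_
    rw [Real.cos_sub]; simp only [Pi.neg_apply]; ring
  apply monotoneOn_of_deriv_nonneg (convex_Icc _ _)
  · exact fun u _ => (hd u).continuousAt.continuousWithinAt
  · exact fun u _ => (hd u).differentiableAt.differentiableWithinAt
  · intro u hu
    rw [interior_Icc] at hu
    rw [(hd u).deriv]
    have hsu : 0 ≤ Real.sin u := Real.sin_nonneg_of_nonneg_of_le_pi hu.1.le (by linarith [hu.2, hu.1])
    have : 0 ≤ Real.cos (r * Real.sin u - u) :=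
      Real.cos_nonneg_of_neg_pi_div_two_le_of_le (by nlinarith [hu.2]) (hb u ⟨hu.1.le, hu.2.le⟩)
    positivity

lemma psi_mono (r : ℝ) (hr : 0 < r)
    (hb : ∀ u ∈ Icc 0 (Real.pi / 2), r * Real.sin u - u ≤ Real.pi / 2)
    (a b : ℝ) (ha : 0 ≤ a) (hab : a ≤ b) (hbr : b ≤ r) :
    Real.exp (-Real.sqrt (r ^ 2 - a ^ 2)) * Real.sin a ≤
      Real.exp (-Real.sqrt (r ^ 2 - b ^ 2)) * Real.sin b := by
  have key : ∀ x, 0 ≤ x → x ≤ r → r * Real.sin (Real.arcsin (x / r)) = x ∧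
      r * Real.cos (Real.arcsin (x / r)) = Real.sqrt (r ^ 2 - x ^ 2) ∧
      Real.arcsin (x / r) ∈ Icc 0 (Real.pi / 2) := by
    intro x h0 h1
    refine ⟨?_, ?_, ?_, Real.arcsin_le_pi_div_two _⟩
    · rw [Real.sin_arcsin (by linarith [div_nonneg h0 hr.le]) (by rw [div_le_one hr]; exact h1)]
      field_simp
    · rw [Real.cos_arcsin]
      have : r ^ 2 - x ^ 2 = r ^ 2 * (1 - (x / r) ^ 2) := by field_simp
      rw [this, Real.sqrt_mul (by positivity), Real.sqrt_sq hr.le]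
    · exact Real.arcsin_nonneg.2 (by positivity)
  obtain ⟨a1, a2, a3⟩ := key a ha (hab.trans hbr)
  obtain ⟨b1, b2, b3⟩ := key b (ha.trans hab) hbr
  have := phi_mono r hr hb a3 b3 (Real.monotone_arcsin (by gcongr))
  simpa only [a1, a2, b1, b2] using this

lemma core (r : ℝ) (hr : 0 < r) 
    (hb : ∀ u ∈ Icc 0 (Real.pi / 2), r * Real.sin u - u ≤ Real.pi / 2)
    (k a b c : ℝ) (ha : 0 < a) (hab : a < b) (hbc : b < c) (hc : c < Real.pi)
    (fa : a ^ 2 + (k - Real.log (Real.sin a)) ^ 2 < r ^ 2)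
    (fc : c ^ 2 + (k - Real.log (Real.sin c)) ^ 2 < r ^ 2) :
    b ^ 2 + (k - Real.log (Real.sin b)) ^ 2 < r ^ 2 := by
  have sa : 0 < Real.sin a := Real.sin_pos_of_pos_of_lt_pi ha (by linarith)
  have sb : 0 < Real.sin b := Real.sin_pos_of_pos_of_lt_pi (by linarith) (by linarith)
  have sc : 0 < Real.sin c := Real.sin_pos_of_pos_of_lt_pi (by linarith) (by linarith)
  by_cases hg : 0 ≤ k - Real.log (Real.sin b)
  · obtain ⟨p, q, hp, hq, hpq, rfl⟩ : ∃ p q : ℝ, 0 < p ∧ 0 < q ∧ p + q = 1 ∧ b = p * a + q * c := by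
      refine ⟨(c - b) / (c - a), (b - a) / (c - a), div_pos (by linarith) (by linarith),
        div_pos (by linarith) (by linarith), ?_, ?_⟩
      · rw [← add_div, div_eq_one_iff_eq (by linarith)]; ring
      · have : c - a ≠ 0 := by linarith
        field_simp; ring
    have h1 := strictConcaveOn_sin_Icc.concaveOn.2 (x := a) (y := c) ⟨by linarith, by linarith⟩
      ⟨by linarith, by linarith⟩ hp.le hq.le hpq
    have h2 := strictConcaveOn_log_Ioi.concaveOn.2 (x := Real.sin a) (y := Real.sin c) sa sc hp.le hq.le hpq
    simp only [smul_eq_mul] at h1 h2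
    have h3 := Real.log_le_log (by positivity) h1
    set A := k - Real.log (Real.sin a) with hA
    set C := k - Real.log (Real.sin c) with hC
    have h4 : k - Real.log (Real.sin (p * a + q * c)) ≤ p * A + q * C := by
      have : k = p * k + q * k := by rw [← add_mul, hpq, one_mul]
      rw [hA, hC]; nlinarith
    have h5 := pow_le_pow_left₀ hg h4 2
    have hq' : q = 1 - p := by linarith
    have h6 : (p * A + q * C) ^ 2 ≤ p * A ^ 2 + q * C ^ 2 := by
      subst hq'; nlinarith [mul_nonneg (mul_nonneg hp.le hq.le) (sq_nonneg (A - C))]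
    have h7 : (p * a + q * c) ^ 2 ≤ p * a ^ 2 + q * c ^ 2 := by
      subst hq'; nlinarith [mul_nonneg (mul_nonneg hp.le hq.le) (sq_nonneg (a - c))]
    have h8 : p * (a ^ 2 + A ^ 2) + q * (c ^ 2 + C ^ 2) < r ^ 2 := by
      have e1 := mul_lt_mul_of_pos_left fa hp
      have e2 := mul_lt_mul_of_pos_left fc hq
      subst hq'; linarith
    linarith
  · push Not at hg
    by_contra hcon
    push Not at hcon
    have hcr : c < r := by nlinarith [sq_nonneg (k - Real.log (Real.sin c))]
    have hm := psi_mono r hr hb b c (by linarith) hbc.le hcr.le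
    have h1 : -Real.sqrt (r ^ 2 - c ^ 2) < k - Real.log (Real.sin c) :=
      Real.neg_sqrt_lt_of_sq_lt (by linarith)
    have h2 : Real.sqrt (r ^ 2 - b ^ 2) ≤ -(k - Real.log (Real.sin b)) :=
      Real.sqrt_le_iff.2 ⟨by linarith, by rw [neg_sq]; linarith⟩
    have h3 := (Real.log_le_log_iff (by positivity) (by positivity)).2 hm
    rw [Real.log_mul (by positivity) sb.ne', Real.log_mul (by positivity) sc.ne', Real.log_exp, Real.log_exp] at h3
    linarith
open InnerProductGeometry in
lemma est {V : Type*} [NormedAddCommGroup V] [InnerProductSpace ℝ V] (x z : V) (m c : ℝ) (hm : 0 < m)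
    (hx : m ≤ ‖x‖) (hz : m ≤ ‖z‖) (hc : 1 ≤ c)
    (hθ : angle x z ^ 2 ≤ c ^ 2 * (2 * (1 - Real.cos (angle x z)))) :
    Real.sqrt (angle x z ^ 2 + (Real.log ‖z‖ - Real.log ‖x‖) ^ 2) ≤ c * (‖z - x‖ / m) := by
  have hx0 : 0 < ‖x‖ := by linarith
  have hz0 : 0 < ‖z‖ := by linarith
  apply Real.sqrt_le_iff.2 ⟨by positivity, ?_⟩
  have h1 : ‖z - x‖ ^ 2 = (‖z‖ - ‖x‖) ^ 2 + ‖x‖ * ‖z‖ * (2 * (1 - Real.cos (angle x z))) := by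
    rw [norm_sub_sq_real, real_inner_comm, ← cos_angle_mul_norm_mul_norm]; ring
  have hl : ∀ a b : ℝ, m ≤ a → m ≤ b → Real.log a - Real.log b ≤ |a - b| / m := by
    intro a b ha hb
    have ha0 : 0 < a := by linarith
    have hb0 : 0 < b := by linarith
    rw [← Real.log_div ha0.ne' hb0.ne']
    calc Real.log (a / b) ≤ a / b - 1 := Real.log_le_sub_one_of_pos (by positivity)
      _ = (a - b) / b := by field_simp
      _ ≤ |a - b| / b := by gcongr; exact le_abs_self _
      _ ≤ |a - b| / m := by gcongr
  have h2 : (Real.log ‖z‖ - Real.log ‖x‖) ^ 2 ≤ ((‖z‖ - ‖x‖) / m) ^ 2 := by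
    apply sq_le_sq.2
    rw [abs_div, abs_of_pos hm]
    refine abs_le.2 ⟨?_, hl _ _ hz hx⟩
    have := hl _ _ hx hz
    rw [abs_sub_comm] at this
    linarith
  have hcos : 0 ≤ 2 * (1 - Real.cos (angle x z)) := by linarith [Real.cos_le_one (angle x z)]
  have h3 : 2 * (1 - Real.cos (angle x z)) ≤ (‖x‖ * ‖z‖ * (2 * (1 - Real.cos (angle x z)))) / m ^ 2 := by
    rw [le_div_iff₀ (by positivity)]
    have : m ^ 2 ≤ ‖x‖ * ‖z‖ := by nlinarith
    nlinarith
  have h4 : 1 ≤ c ^ 2 := by nlinarith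
  calc angle x z ^ 2 + (Real.log ‖z‖ - Real.log ‖x‖) ^ 2
      ≤ c ^ 2 * ((‖x‖ * ‖z‖ * (2 * (1 - Real.cos (angle x z)))) / m ^ 2)
        + c ^ 2 * ((‖z‖ - ‖x‖) / m) ^ 2 := by
        apply add_le_add
        · exact hθ.trans (by gcongr)
        · exact h2.trans (le_mul_of_one_le_left (sq_nonneg _) h4)
    _ = (c * (‖z - x‖ / m)) ^ 2 := by
        rw [mul_pow, div_pow, div_pow, h1]; ring

open InnerProductGeometry in
lemma est_global {V : Type*} [NormedAddCommGroup V] [InnerProductSpace ℝ V] (x z : V) :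
    angle x z ^ 2 ≤ (Real.pi / 2) ^ 2 * (2 * (1 - Real.cos (angle x z))) := by
  have h := Real.cos_le_one_sub_mul_cos_sq (x := angle x z)
    (by rw [abs_of_nonneg (angle_nonneg _ _)]; exact angle_le_pi _ _)
  have hp := Real.pi_pos
  have : (Real.pi / 2) ^ 2 * (2 * (1 - (1 - 2 / Real.pi ^ 2 * angle x z ^ 2))) = angle x z ^ 2 := by
    field_simp; ring
  calc angle x z ^ 2 = _ := this.symm
    _ ≤ _ := by gcongr

lemma est_local (c : ℝ) (hc : 1 < c) :
    ∀ᶠ θ in nhds (0 : ℝ), θ ^ 2 ≤ c ^ 2 * (2 * (1 - Real.cos θ)) := by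
  have h1 : ∀ᶠ θ in nhds (0 : ℝ), |θ| ≤ 1 := by
    have : Filter.Tendsto (fun θ : ℝ => |θ|) (nhds 0) (nhds |0|) := continuous_abs.continuousAt
    rw [abs_zero] at this
    exact this.eventually_le_const (by norm_num)
  have h2 : ∀ᶠ θ in nhds (0 : ℝ), 1 ≤ c ^ 2 * (1 - θ ^ 2 * (5 / 48)) := by
    have : Filter.Tendsto (fun θ : ℝ => c ^ 2 * (1 - θ ^ 2 * (5 / 48))) (nhds 0)
      (nhds (c ^ 2 * (1 - 0 ^ 2 * (5 / 48)))) := Continuous.tendsto (by fun_prop) 0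
    refine this.eventually_const_le ?_
    nlinarith
  filter_upwards [h1, h2] with θ h1 h2
  have h3 := abs_le.1 (Real.cos_bound h1)
  have h4 : |θ| ^ 4 = θ ^ 2 * θ ^ 2 := by rw [← pow_add, show 2 + 2 = 4 from rfl, Even.pow_abs ⟨2, rfl⟩]
  rw [h4] at h3
  have h5 : θ ^ 2 * (1 - θ ^ 2 * (5 / 48)) ≤ 2 * (1 - Real.cos θ) := by linarith [h3.2]
  calc θ ^ 2 ≤ θ ^ 2 * (c ^ 2 * (1 - θ ^ 2 * (5 / 48))) := le_mul_of_one_le_right (sq_nonneg _) h2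
    _ = c ^ 2 * (θ ^ 2 * (1 - θ ^ 2 * (5 / 48))) := by ring
    _ ≤ _ := by gcongr

open InnerProductGeometry in
lemma phi_diff {V : Type*} [NormedAddCommGroup V] [InnerProductSpace ℝ V] (y x z : V) (α β : ℝ) :
    |(α * angle y z + β * Real.log ‖z‖) - (α * angle y x + β * Real.log ‖x‖)| ≤
    Real.sqrt (α ^ 2 + β ^ 2) *
      Real.sqrt (angle x z ^ 2 + (Real.log ‖z‖ - Real.log ‖x‖) ^ 2) := by
  rw [← Real.sqrt_mul (by positivity)]
  apply Real.abs_le_sqrt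
  have h1 := angle_le_angle_add_angle y x z
  have h2 := angle_le_angle_add_angle y z x
  rw [angle_comm z x] at h2
  have h3 : (angle y z - angle y x) ^ 2 ≤ angle x z ^ 2 := by
    apply sq_le_sq.2
    rw [abs_of_nonneg (angle_nonneg x z)]
    exact abs_le.2 ⟨by linarith, by linarith⟩
  set P := angle y z - angle y x
  set Q := Real.log ‖z‖ - Real.log ‖x‖
  calc _ = (α * P + β * Q) ^ 2 := by ring
    _ ≤ (α ^ 2 + β ^ 2) * (P ^ 2 + Q ^ 2) := by nlinarith [sq_nonneg (α * Q - β * P)]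
    _ ≤ _ := by gcongr

lemma deriv_bound {V : Type*} [NormedAddCommGroup V] [NormedSpace ℝ V] (φ : ℝ → ℝ) (γ : ℝ → V)
    (t φ' C : ℝ) (γ' : V) (h1 : HasDerivAt φ φ' t) (h2 : HasDerivAt γ γ' t)
    (h : ∀ᶠ s in nhds t, |φ s - φ t| ≤ C * ‖γ s - γ t‖) : |φ'| ≤ C * ‖γ'‖ := by
  have e1 := (hasDerivAt_iff_tendsto_slope.1 h1).norm
  have e2 := ((hasDerivAt_iff_tendsto_slope.1 h2).norm).const_mul C
  refine le_of_tendsto_of_tendsto e1 e2 ?_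
  filter_upwards [h.filter_mono nhdsWithin_le_nhds] with s hs
  rw [slope_def_module, slope_def_module, norm_smul, norm_smul]
  calc _ ≤ ‖(s - t)⁻¹‖ * (C * ‖γ s - γ t‖) := by gcongr; exact hs
    _ = _ := by ring

open InnerProductGeometry in
lemma lower_deriv {V : Type*} [NormedAddCommGroup V] [InnerProductSpace ℝ V] (y : V) (γ : ℝ → V)
    (α β t φ' : ℝ) (γ' : V) (h0 : γ t ≠ 0)
    (h1 : HasDerivAt (fun t => α * angle y (γ t) + β * Real.log ‖γ t‖) φ' t)
    (h2 : HasDerivAt γ γ' t) : φ' ≤ Real.sqrt (α ^ 2 + β ^ 2) * (‖γ'‖ / ‖γ t‖) := by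
  have hn : 0 < ‖γ t‖ := norm_pos_iff.2 h0
  have key : ∀ c : ℝ, 1 < c → φ' ≤ c * (c * (Real.sqrt (α ^ 2 + β ^ 2) * (‖γ'‖ / ‖γ t‖))) := by
    intro c hc
    have hc0 : 0 < c := by linarith
    have hcont := h2.continuousAt
    have ev1 : ∀ᶠ s in nhds t, ‖γ t‖ / c ≤ ‖γ s‖ := by
      refine hcont.norm.tendsto.eventually_const_le ?_
      exact div_lt_self hn hc
    have ev2 : ∀ᶠ s in nhds t, angle (γ t) (γ s) ^ 2 ≤ c ^ 2 * (2 * (1 - Real.cos (angle (γ t) (γ s)))) := by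
      have : Filter.Tendsto (fun s => angle (γ t) (γ s)) (nhds t) (nhds 0) := by
        have := (continuousAt_angle h0 h0).tendsto.comp
          ((continuousAt_const (y := γ t)).prodMk hcont).tendsto
        simpa [angle_self h0, Function.comp_def] using this
      exact this.eventually (est_local c hc)
    have := deriv_bound _ γ t φ' (Real.sqrt (α ^ 2 + β ^ 2) * (c * (c / ‖γ t‖))) γ' h1 h2 (by
      filter_upwards [ev1, ev2] with s e1 e2
      refine (phi_diff y (γ t) (γ s) α β).trans ?_
      have := est (γ t) (γ s) (‖γ t‖ / c) c (by positivity) (div_le_self hn.le hc.le) e1 hc.le e2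
      calc _ ≤ Real.sqrt (α ^ 2 + β ^ 2) * (c * (‖γ s - γ t‖ / (‖γ t‖ / c))) := by gcongr
        _ = _ := by field_simp)
    refine (le_abs_self _).trans (this.trans (le_of_eq ?_))
    ring
  have hlim : Filter.Tendsto (fun c : ℝ => c * (c * (Real.sqrt (α ^ 2 + β ^ 2) * (‖γ'‖ / ‖γ t‖))))
      (nhdsWithin 1 (Ioi 1)) (nhds (1 * (1 * (Real.sqrt (α ^ 2 + β ^ 2) * (‖γ'‖ / ‖γ t‖))))) :=
    (Continuous.tendsto (by fun_prop) 1).mono_left nhdsWithin_le_nhds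
  rw [one_mul, one_mul] at hlim
  refine ge_of_tendsto hlim ?_
  filter_upwards [self_mem_nhdsWithin] with c hc using key c hc
open InnerProductGeometry in
lemma lower_path {V : Type*} [NormedAddCommGroup V] [InnerProductSpace ℝ V] [FiniteDimensional ℝ V]
    (y z : V) (γ : ℝ → V) (K : NNReal)
    (hK : LipschitzOnWith K γ (Icc 0 1)) (hne : ∀ t ∈ Icc (0:ℝ) 1, γ t ≠ 0) (h0 : γ 0 = y) (h1 : γ 1 = z)
    (hy : y ≠ 0) :
    Real.sqrt (angle y z ^ 2 + (Real.log ‖z‖ - Real.log ‖y‖) ^ 2) ≤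
      ∫ t in (0:ℝ)..1, ‖deriv γ t‖ / ‖γ t‖ := by
  obtain ⟨m, hm, hmle⟩ : ∃ m : ℝ, 0 < m ∧ ∀ t ∈ Icc (0:ℝ) 1, m ≤ ‖γ t‖ := by
    obtain ⟨t0, ht0, hmin⟩ := isCompact_Icc.exists_isMinOn (nonempty_Icc.2 zero_le_one)
      (hK.continuousOn.norm)
    exact ⟨‖γ t0‖, norm_pos_iff.2 (hne t0 ht0), fun t ht => hmin ht⟩
  set α := angle y z
  set β := Real.log ‖z‖ - Real.log ‖y‖
  set S := Real.sqrt (α ^ 2 + β ^ 2) with hS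
  have hS0 : 0 ≤ S := Real.sqrt_nonneg _
  set φ : ℝ → ℝ := fun t => α * angle y (γ t) + β * Real.log ‖γ t‖ with hφ
  have hpi2 : 1 ≤ Real.pi / 2 := by linarith [Real.pi_gt_three]
  have hlip : LipschitzOnWith (Real.toNNReal (S * (Real.pi / 2 * (K / m)))) φ (uIcc 0 1) := by
    rw [uIcc_of_le zero_le_one]
    apply LipschitzOnWith.of_dist_le_mul
    intro t ht s hs
    rw [Real.coe_toNNReal _ (by positivity), Real.dist_eq]
    refine (phi_diff y (γ s) (γ t) α β).trans ?_
    have e1 := est (γ s) (γ t) m (Real.pi / 2) hm (hmle s hs) (hmle t ht) hpi2 (est_global _ _)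
    have e2 := hK.dist_le_mul t ht s hs
    rw [dist_eq_norm] at e2
    calc _ ≤ S * (Real.pi / 2 * ((K * dist t s) / m)) := by
          refine mul_le_mul_of_nonneg_left (e1.trans ?_) hS0
          gcongr
      _ = _ := by ring
  have hac := hlip.absolutelyContinuousOnInterval
  have hacγ : AbsolutelyContinuousOnInterval γ 0 1 :=
    LipschitzOnWith.absolutelyContinuousOnInterval (K := K) (by rwa [uIcc_of_le zero_le_one])
  have hint : IntervalIntegrable (fun t => ‖deriv γ t‖ / ‖γ t‖) volume 0 1 := by
    apply (intervalIntegrable_const (c := K / m)).mono_fun'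
    · apply AEMeasurable.aestronglyMeasurable
      apply AEMeasurable.div
      · exact (stronglyMeasurable_deriv γ).norm.measurable.aemeasurable
      · apply ContinuousOn.aemeasurable _ measurableSet_uIoc
        apply hK.continuousOn.norm.mono
        rw [uIoc_of_le zero_le_one]
        exact Ioc_subset_Icc_self
    · rw [uIoc_of_le zero_le_one, ← restrict_Ioo_eq_restrict_Ioc]
      refine (ae_restrict_mem measurableSet_Ioo).mono ?_
      intro t ht
      have e := norm_deriv_le_of_lipschitzOn (Icc_mem_nhds ht.1 ht.2) hK
      have e2 := hmle t ⟨ht.1.le, ht.2.le⟩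
      change ‖‖deriv γ t‖ / ‖γ t‖‖ ≤ K / m
      rw [Real.norm_of_nonneg (by positivity)]
      gcongr
  have hftc := hac.integral_deriv_eq_sub
  have hle : ∫ t in (0:ℝ)..1, deriv φ t ≤ ∫ t in (0:ℝ)..1, S * (‖deriv γ t‖ / ‖γ t‖) := by
    apply intervalIntegral.integral_mono_ae_restrict zero_le_one hac.intervalIntegrable_deriv
      (hint.const_mul S)
    refine (ae_restrict_iff' measurableSet_Icc).2 ?_
    filter_upwards [hac.ae_differentiableAt, hacγ.boundedVariationOn.ae_differentiableAt_of_mem_uIcc]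
      with t d1 d2 ht
    rw [uIcc_of_le zero_le_one] at d1 d2
    exact lower_deriv y γ α β t _ _ (hne t ht) (d1 ht).hasDerivAt (d2 ht).hasDerivAt
  rw [intervalIntegral.integral_const_mul, hftc] at hle
  have hval : φ 1 - φ 0 = S ^ 2 := by
    simp only [hφ, h0, h1, angle_self hy]
    rw [hS, Real.sq_sqrt (by positivity)]
    simp only [α, β]; ring
  rw [hval] at hle
  rcases hS0.eq_or_lt with h | h
  · rw [← h]
    apply intervalIntegral.integral_nonneg zero_le_one
    intro t _; positivity
  · nlinarith

open InnerProductGeometry in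
lemma upper_path {V : Type*} [NormedAddCommGroup V] [InnerProductSpace ℝ V]
    (y z : V) (hy : y ≠ 0) (hz : z ≠ 0) (hperp : ∃ w : V, w ≠ 0 ∧ inner ℝ y w = 0) :
    ∃ γ : ℝ → V, (∃ K : NNReal, LipschitzOnWith K γ (Icc 0 1)) ∧ (∀ t, γ t ≠ 0) ∧ γ 0 = y ∧ γ 1 = z ∧
      ∫ t in (0:ℝ)..1, ‖deriv γ t‖ / ‖γ t‖ =
        Real.sqrt (angle y z ^ 2 + (Real.log ‖z‖ - Real.log ‖y‖) ^ 2) := by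
  have hy0 : 0 < ‖y‖ := norm_pos_iff.2 hy
  have hz0 : 0 < ‖z‖ := norm_pos_iff.2 hz
  set θ := angle y z with hθ
  set s := Real.log ‖z‖ - Real.log ‖y‖ with hs
  have hes : Real.exp s * ‖y‖ = ‖z‖ := by
    rw [hs, Real.exp_sub, Real.exp_log hz0, Real.exp_log hy0]; field_simp
  -- second vector, of the same norm as y
  obtain ⟨w, hw1, hw2, hw3⟩ : ∃ w : V, inner ℝ y w = 0 ∧ (θ = 0 ∨ ‖w‖ = ‖y‖) ∧
      z = Real.exp s • (Real.cos θ • y + Real.sin θ • w) := by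
    by_cases h0 : θ = 0
    · refine ⟨0, by simp, Or.inl h0, ?_⟩
      obtain ⟨_, c, hc, hzc⟩ := angle_eq_zero_iff.1 h0
      have : Real.exp s = c := by
        have : Real.exp s * ‖y‖ = c * ‖y‖ := by
          rw [hes, hzc, norm_smul, Real.norm_of_nonneg hc.le]
        exact mul_right_cancel₀ hy0.ne' this
      rw [h0, this]; simpa using hzc
    by_cases hpi : θ = Real.pi
    · obtain ⟨w0, hw0, hw0'⟩ := hperp
      obtain ⟨_, c, hc, hzc⟩ := angle_eq_pi_iff.1 hpi
      have hn0 := norm_pos_iff.2 hw0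
      refine ⟨(‖y‖ / ‖w0‖) • w0, ?_, Or.inr ?_, ?_⟩
      · rw [inner_smul_right, hw0', mul_zero]
      · rw [norm_smul, Real.norm_of_nonneg (by positivity)]; field_simp
      · have : Real.exp s = -c := by
          have : Real.exp s * ‖y‖ = -c * ‖y‖ := by
            rw [hes, hzc, norm_smul, Real.norm_of_nonpos hc.le]
          exact mul_right_cancel₀ hy0.ne' this
        rw [hpi, this]; simpa using hzc
    · have hsin : 0 < Real.sin θ := Real.sin_pos_of_pos_of_lt_pi
        (lt_of_le_of_ne (angle_nonneg _ _) (Ne.symm h0)) (lt_of_le_of_ne (angle_le_pi _ _) hpi)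
      have hin : inner ℝ y z = Real.cos θ * (‖y‖ * ‖z‖) := (cos_angle_mul_norm_mul_norm y z).symm
      have hep := Real.exp_pos s
      set w := (Real.sin θ)⁻¹ • ((Real.exp s)⁻¹ • z - Real.cos θ • y) with hw
      have hyy : inner ℝ y y = ‖y‖ ^ 2 := real_inner_self_eq_norm_sq y
      refine ⟨w, ?_, Or.inr ?_, ?_⟩
      · rw [hw, inner_smul_right, inner_sub_right, inner_smul_right, inner_smul_right, hin, hyy, ← hes]
        field_simp; ring
      · apply (pow_left_inj₀ (norm_nonneg _) (norm_nonneg _) two_ne_zero).1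
        rw [hw, norm_smul, mul_pow, norm_sub_sq_real, norm_smul, norm_smul, inner_smul_left,
          inner_smul_right, real_inner_comm, hin, ← hes]
        simp only [Real.norm_eq_abs, mul_pow, sq_abs]
        have := Real.sin_sq_add_cos_sq θ
        simp only [conj_trivial]
        field_simp
        rw [Real.sin_sq]; ring
      · rw [hw, smul_inv_smul₀ hsin.ne', add_sub_cancel, smul_inv_smul₀ hep.ne']
  set γ : ℝ → V := fun t => Real.exp (t * s) • (Real.cos (t * θ) • y + Real.sin (t * θ) • w) with hγ
  have hnorm : ∀ t a b : ℝ, ‖(a * Real.cos (t * θ) - b * θ * Real.sin (t * θ)) • y +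
      (a * Real.sin (t * θ) + b * θ * Real.cos (t * θ)) • w‖ = Real.sqrt ((b * θ) ^ 2 + a ^ 2) * ‖y‖ := by
    intro t a b
    apply (pow_left_inj₀ (norm_nonneg _) (by positivity) two_ne_zero).1
    rw [norm_add_sq_real, norm_smul, norm_smul, inner_smul_left, inner_smul_right, hw1, mul_pow, mul_pow,
      mul_pow, Real.sq_sqrt (by positivity)]
    simp only [Real.norm_eq_abs, sq_abs, mul_zero, add_zero]
    have := Real.sin_sq_add_cos_sq (t * θ)
    rcases hw2 with h | h
    · rw [h]; simp
    · rw [h]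
      have h5 : Real.sin (t * θ) ^ 2 = 1 - Real.cos (t * θ) ^ 2 := by linarith
      ring_nf
      rw [h5]; ring
  have hγn : ∀ t, ‖γ t‖ = Real.exp (t * s) * ‖y‖ := by
    intro t
    have := hnorm t 1 0
    simp only [hγ]
    rw [norm_smul, Real.norm_of_nonneg (Real.exp_pos _).le]
    simpa using this
  have hder : ∀ t, HasDerivAt γ (Real.exp (t * s) • ((s * Real.cos (t * θ) - 1 * θ * Real.sin (t * θ)) • y +
      (s * Real.sin (t * θ) + 1 * θ * Real.cos (t * θ)) • w)) t := by
    intro t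
    have e1 : HasDerivAt (fun t : ℝ => t * s) s t := by simpa using (hasDerivAt_id t).mul_const s
    have e2 : HasDerivAt (fun t : ℝ => t * θ) θ t := by simpa using (hasDerivAt_id t).mul_const θ
    refine (e1.exp.smul ((e2.cos.smul_const y).add (e2.sin.smul_const w))).congr_deriv ?_
    simp only [Pi.add_apply]
    module
  refine ⟨γ, ?_, ?_, ?_, ?_, ?_⟩
  · have : ContDiff ℝ 1 γ := by
      simp only [hγ]; fun_prop
    exact (this.locallyLipschitz.locallyLipschitzOn).exists_lipschitzOnWith_of_compact isCompact_Icc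
  · intro t h
    have := hγn t
    rw [h, norm_zero] at this
    have : 0 < Real.exp (t * s) * ‖y‖ := by positivity
    linarith
  · simp [hγ]
  · simp only [hγ, one_mul]; exact hw3.symm
  · have : ∀ t, ‖deriv γ t‖ / ‖γ t‖ = Real.sqrt (θ ^ 2 + s ^ 2) := by
      intro t
      rw [(hder t).deriv, norm_smul, hnorm, hγn, Real.norm_of_nonneg (Real.exp_pos _).le, one_mul]
      have := Real.exp_pos (t * s)
      field_simp
    simp [this]

open InnerProductGeometry in
lemma mem_qhBall_iff {V : Type*} [NormedAddCommGroup V] [InnerProductSpace ℝ V] [FiniteDimensional ℝ V]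
    (y z : V) (hy : y ≠ 0)  (hperp : ∃ w : V, w ≠ 0 ∧ inner ℝ y w = 0) (r : ℝ) (hr : 0 < r) :
    z ∈ qhBall ({0}ᶜ : Set V) y r ↔
      z ≠ 0 ∧ angle y z ^ 2 + (Real.log ‖z‖ - Real.log ‖y‖) ^ 2 < r ^ 2 := by
  have hfr : frontier ({0}ᶜ : Set V) = {0} := by
    have : Nontrivial V := ⟨y, 0, hy⟩
    have : Filter.NeBot (nhdsWithin (0:V) {0}ᶜ) := Module.punctured_nhds_neBot ℝ V 0
    rw [frontier_compl, frontier, closure_singleton, interior_singleton, sdiff_empty]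
  have hlen : ∀ γ : ℝ → V, qhLength ({0}ᶜ : Set V) γ = ∫ t in (0:ℝ)..1, ‖deriv γ t‖ / ‖γ t‖ := by
    intro γ
    simp only [qhLength, hfr, infDist_singleton, dist_zero_right]
  have hbdd : BddBelow (qhLength ({0}ᶜ : Set V) '' {γ | IsRectPath ({0}ᶜ : Set V) y z γ}) := by
    refine ⟨0, ?_⟩
    rintro _ ⟨γ, _, rfl⟩
    rw [hlen]
    apply intervalIntegral.integral_nonneg zero_le_one
    intro t _; positivity
  have hlow : ∀ γ, IsRectPath ({0}ᶜ : Set V) y z γ → 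
      Real.sqrt (angle y z ^ 2 + (Real.log ‖z‖ - Real.log ‖y‖) ^ 2) ≤ qhLength ({0}ᶜ : Set V) γ := by
    rintro γ ⟨⟨K, hK⟩, hm, h0, h1⟩
    rw [hlen]
    exact lower_path y z γ K hK (fun t ht => hm ht) h0 h1 hy
  constructor
  · rintro ⟨hz, hd⟩
    have hz' : z ≠ 0 := hz
    refine ⟨hz', ?_⟩
    have hne : (qhLength ({0}ᶜ : Set V) '' {γ | IsRectPath ({0}ᶜ : Set V) y z γ}).Nonempty := by
      obtain ⟨γ, hL, hn, h0, h1, hI⟩ := upper_path y z hy hz' hperp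
      exact ⟨_, γ, ⟨hL, fun t _ => hn t, h0, h1⟩, rfl⟩
    have hd' : sInf (qhLength ({0}ᶜ : Set V) '' {γ | IsRectPath ({0}ᶜ : Set V) y z γ}) < r := hd
    obtain ⟨_, ⟨γ, hγ, rfl⟩, hlt⟩ := exists_lt_of_csInf_lt hne hd'
    exact (Real.sqrt_lt' hr).1 ((hlow γ hγ).trans_lt hlt)
  · rintro ⟨hz, hlt⟩
    refine ⟨hz, ?_⟩
    obtain ⟨γ, hL, hn, h0, h1, hI⟩ := upper_path y z hy hz hperp
    refine lt_of_le_of_lt (csInf_le hbdd ⟨γ, ⟨hL, fun t _ => hn t, h0, h1⟩, rfl⟩) ?_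
    rw [hlen, hI]
    exact (Real.sqrt_lt' hr).2 hlt
lemma halfline_upper (U : Set ℝ) (hU : IsUpperSet U) (hne : U.Nonempty) (hb : BddBelow U) :
    IsHalfline U := by
  refine ⟨sInf U, 1, one_ne_zero, ?_⟩
  by_cases h : sInf U ∈ U
  · right
    ext p
    constructor
    · intro hp
      exact ⟨p - sInf U, by linarith [csInf_le hb hp], by simp⟩
    · rintro ⟨t, ht, rfl⟩
      exact hU (by simpa using ht) h
  · left
    ext p
    constructor
    · intro hp
      have h1 := csInf_le hb hp
      have h2 : sInf U ≠ p := fun e => h (e ▸ hp)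
      exact ⟨p - sInf U, by linarith [lt_of_le_of_ne h1 h2], by simp⟩
    · rintro ⟨t, ht, rfl⟩
      obtain ⟨x, hx, hlt⟩ := exists_lt_of_csInf_lt (b := t • 1 + sInf U) hne (by simpa using ht)
      exact hU hlt.le hx

lemma halfline_lower (U : Set ℝ) (hU : IsLowerSet U) (hne : U.Nonempty) (hb : BddAbove U) :
    IsHalfline U := by
  obtain ⟨z, v, hv, h⟩ := halfline_upper (-U) hU.neg hne.neg hb.neg
  refine ⟨-z, -v, neg_ne_zero.2 hv, h.imp (fun h => ?_) (fun h => ?_)⟩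
  all_goals
    ext p
    rw [← neg_mem_neg, h]
    constructor
    · rintro ⟨t, ht, e⟩
      exact ⟨t, ht, by rw [smul_neg, ← neg_add, ← e, neg_neg]⟩
    · rintro ⟨t, ht, e⟩
      exact ⟨t, ht, by rw [e, smul_neg, ← neg_add, neg_neg]⟩

lemma ctc_real (I : Set ℝ) (hI : I.OrdConnected) : CloseToConvex I := by
  rcases I.eq_empty_or_nonempty with rfl | ⟨x0, hx0⟩
  · refine ⟨{Iio 0, Ici 0}, ?_, ?_, ?_⟩
    · rintro L (rfl | rfl)
      · exact halfline_lower _ (isLowerSet_Iio 0) ⟨-1, by simp⟩ bddAbove_Iio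
      · exact halfline_upper _ (isUpperSet_Ici 0) ⟨1, by simp⟩ bddBelow_Ici
    · rintro L (rfl | rfl) M (rfl | rfl) hne
      · exact absurd rfl hne
      · exact Set.disjoint_left.2 fun x (h1 : x < 0) (h2 : 0 ≤ x) => by linarith
      · exact Set.disjoint_left.2 fun x (h1 : 0 ≤ x) (h2 : x < 0) => by linarith
      · exact absurd rfl hne
    · simp
  · refine ⟨{L | L.Nonempty ∧ (L = Iᶜ ∩ Iio x0 ∨ L = Iᶜ ∩ Ioi x0)}, ?_, ?_, ?_⟩
    · rintro L ⟨hne, rfl | rfl⟩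
      · refine halfline_lower _ ?_ hne ⟨x0, fun x hx => hx.2.le⟩
        rintro a b hab ⟨h1, h2⟩
        exact ⟨fun hb => h1 (hI.out hb hx0 ⟨hab, le_of_lt h2⟩), lt_of_le_of_lt hab h2⟩
      · refine halfline_upper _ ?_ hne ⟨x0, fun x hx => hx.2.le⟩
        rintro a b hab ⟨h1, h2⟩
        exact ⟨fun hb => h1 (hI.out hx0 hb ⟨le_of_lt h2, hab⟩), lt_of_lt_of_le h2 hab⟩
    · rintro L ⟨_, rfl | rfl⟩ M ⟨_, rfl | rfl⟩ hne
      · exact absurd rfl hne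
      · exact Set.disjoint_left.2 fun x h1 h2 => lt_asymm (mem_Iio.1 h1.2) (mem_Ioi.1 h2.2)
      · exact Set.disjoint_left.2 fun x h1 h2 => lt_asymm (mem_Ioi.1 h1.2) (mem_Iio.1 h2.2)
      · exact absurd rfl hne
    · ext x
      constructor
      · intro hx
        rcases lt_trichotomy x x0 with h | h | h
        · exact ⟨Iᶜ ∩ Iio x0, ⟨⟨x, hx, h⟩, Or.inl rfl⟩, hx, h⟩
        · exact absurd (h ▸ hx0) hx
        · exact ⟨Iᶜ ∩ Ioi x0, ⟨⟨x, hx, h⟩, Or.inr rfl⟩, hx, h⟩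
      · rintro ⟨L, ⟨_, rfl | rfl⟩, hx⟩ <;> exact hx.1

lemma ctc_fiber {V : Type*} [NormedAddCommGroup V] [InnerProductSpace ℝ V] (G : Set V) (e : V)
    (he : ‖e‖ = 1)
    (h : ∀ w : V, inner ℝ e w = 0 → CloseToConvex {x : ℝ | x • e + w ∈ G}) : CloseToConvex G := by
  have hee : inner ℝ e e = 1 := by rw [real_inner_self_eq_norm_sq, he, one_pow]
  have he0 : e ≠ 0 := by rintro rfl; simp at he
  choose S h1 h2 h3 using h
  refine ⟨{M | ∃ w, ∃ hw : inner ℝ e w = 0, ∃ L ∈ S w hw, M = (fun x : ℝ => x • e + w) '' L}, ?_, ?_, ?_⟩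
  · rintro M ⟨w, hw, L, hL, rfl⟩
    obtain ⟨z, v, hv, hh⟩ := h1 w hw L hL
    refine ⟨z • e + w, v • e, smul_ne_zero hv he0, hh.imp (fun hh => ?_) (fun hh => ?_)⟩
    all_goals
      subst hh
      ext p
      constructor
      · rintro ⟨_, ⟨t, ht, rfl⟩, rfl⟩
        exact ⟨t, ht, by simp only [smul_eq_mul]; module⟩
      · rintro ⟨t, ht, rfl⟩
        exact ⟨_, ⟨t, ht, rfl⟩, by simp only [smul_eq_mul]; module⟩
  · rintro M ⟨w, hw, L, hL, rfl⟩ M' ⟨w', hw', L', hL', rfl⟩ hne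
    refine Set.disjoint_left.2 ?_
    rintro p ⟨x, hx, rfl⟩ ⟨x', hx', hxx⟩
    apply hne
    simp only at hxx
    have hxe : x' = x := by
      have := congrArg (fun q => inner ℝ e q) hxx
      simpa [inner_add_right, inner_smul_right, hee, hw, hw', he0] using this
    subst hxe
    have hww : w' = w := add_left_cancel hxx
    subst hww
    by_cases hLL : L = L'
    · rw [hLL]
    · exact absurd hx' (Set.disjoint_left.1 (h2 w' hw hL hL' hLL) hx)
  · ext p
    constructor
    · intro hp
      have hw : inner ℝ e (p - (inner ℝ e p : ℝ) • e) = 0 := by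
        rw [inner_sub_right, inner_smul_right, hee]; ring
      have : (inner ℝ e p : ℝ) ∈ {x : ℝ | x • e + (p - (inner ℝ e p : ℝ) • e) ∈ G}ᶜ := by
        simpa using hp
      rw [h3 _ hw] at this
      obtain ⟨L, hL, hx⟩ := this
      exact ⟨_, ⟨_, hw, L, hL, rfl⟩, _, hx, by simp⟩
    · rintro ⟨_, ⟨w, hw, L, hL, rfl⟩, x, hx, rfl⟩
      have : x ∈ {x : ℝ | x • e + w ∈ G}ᶜ := by
        rw [h3 w hw]; exact ⟨L, hL, hx⟩
      exact this

open InnerProductGeometry in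
lemma fiber_coords {V : Type*} [NormedAddCommGroup V] [InnerProductSpace ℝ V] (e w : V)
    (he : ‖e‖ = 1) (hw : inner ℝ e w = 0) (hw0 : w ≠ 0) (x : ℝ) :
    angle e (x • e + w) = Real.pi / 2 - Real.arctan (x / ‖w‖) ∧
    Real.log ‖x • e + w‖ = Real.log ‖w‖ - Real.log (Real.sin (Real.pi / 2 - Real.arctan (x / ‖w‖))) := by
  have hh : 0 < ‖w‖ := norm_pos_iff.2 hw0
  have hq : 0 < Real.sqrt (1 + (x / ‖w‖) ^ 2) := Real.sqrt_pos.2 (by positivity)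
  have hn : ‖x • e + w‖ = ‖w‖ * Real.sqrt (1 + (x / ‖w‖) ^ 2) := by
    apply (pow_left_inj₀ (norm_nonneg _) (by positivity) two_ne_zero).1
    rw [norm_add_sq_real, norm_smul, he, inner_smul_left, hw, mul_pow, mul_pow,
      Real.sq_sqrt (by positivity)]
    simp only [Real.norm_eq_abs, sq_abs]
    field_simp
    simp; ring
  constructor
  · rw [angle, inner_add_right, inner_smul_right, real_inner_self_eq_norm_sq, hw, he, hn,
      Real.arccos_eq_pi_div_two_sub_arcsin, Real.arctan_eq_arcsin]
    congr 2
    field_simp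
    ring
  · rw [Real.sin_pi_div_two_sub, Real.cos_arctan, hn, Real.log_mul hh.ne' hq.ne', one_div, Real.log_inv]
    ring

open InnerProductGeometry in
lemma fiber_conv {V : Type*} [NormedAddCommGroup V] [InnerProductSpace ℝ V] (e w : V)
    (he : ‖e‖ = 1) (hw : inner ℝ e w = 0) (r k : ℝ) (hr : 0 < r) (hrpi : r < Real.pi)
    (hb : ∀ u ∈ Icc 0 (Real.pi / 2), r * Real.sin u - u ≤ Real.pi / 2) :
    {x : ℝ | x • e + w ≠ 0 ∧
      angle e (x • e + w) ^ 2 + (Real.log ‖x • e + w‖ - k) ^ 2 < r ^ 2}.OrdConnected := by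
  have he0 : e ≠ 0 := by rintro rfl; simp at he
  apply Set.ordConnected_of_Ioo
  rintro a ⟨ha0, ha⟩ c ⟨hc0, hc⟩ hac b ⟨hab, hbc⟩
  by_cases hw0 : w = 0
  · subst hw0
    simp only [add_zero] at *
    have hapos : 0 < a := by
      rcases lt_trichotomy a 0 with h | h | h
      · rw [angle_smul_right_of_neg _ _ h, angle_neg_right, angle_self he0] at ha
        nlinarith [sq_nonneg (Real.log ‖a • e‖ - k)]
      · simp [h] at ha0
      · exact h
    have hb0 : 0 < b := by linarith
    have hc0' : 0 < c := by linarith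
    refine ⟨smul_ne_zero hb0.ne' he0, ?_⟩
    have key : ∀ x : ℝ, 0 < x → angle e (x • e) = 0 ∧ ‖x • e‖ = x := by
      intro x hx
      rw [angle_smul_right_of_pos _ _ hx, angle_self he0, norm_smul, he, mul_one,
        Real.norm_of_nonneg hx.le]
      exact ⟨rfl, rfl⟩
    rw [(key a hapos).1, (key a hapos).2] at ha
    rw [(key c hc0').1, (key c hc0').2] at hc
    rw [(key b hb0).1, (key b hb0).2]
    have l1 := Real.log_lt_log hapos hab
    have l2 := Real.log_lt_log hb0 hbc
    have ha' := abs_lt_of_sq_lt_sq (by linarith : (Real.log a - k) ^ 2 < r ^ 2) hr.le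
    have hc' := abs_lt_of_sq_lt_sq (by linarith : (Real.log c - k) ^ 2 < r ^ 2) hr.le
    have : (Real.log b - k) ^ 2 < r ^ 2 := by
      apply sq_lt_sq'
      · linarith [(abs_lt.1 ha').1]
      · linarith [(abs_lt.1 hc').2]
    linarith
  · have hh : 0 < ‖w‖ := norm_pos_iff.2 hw0
    refine ⟨?_, ?_⟩
    · intro h
      have := congrArg (fun q => inner ℝ w q) h
      simp [inner_add_right, inner_smul_right, real_inner_comm, hw, hw0] at this
    · rw [(fiber_coords e w he hw hw0 a).1, (fiber_coords e w he hw hw0 a).2] at ha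
      rw [(fiber_coords e w he hw hw0 c).1, (fiber_coords e w he hw hw0 c).2] at hc
      rw [(fiber_coords e w he hw hw0 b).1, (fiber_coords e w he hw hw0 b).2]
      have m1 : Real.arctan (a / ‖w‖) < Real.arctan (b / ‖w‖) := Real.arctan_strictMono (by gcongr)
      have m2 : Real.arctan (b / ‖w‖) < Real.arctan (c / ‖w‖) := Real.arctan_strictMono (by gcongr)
      rw [sub_right_comm] at ha hc ⊢
      exact core r hr hb (Real.log ‖w‖ - k) _ _ _
        (by linarith [Real.arctan_lt_pi_div_two (c / ‖w‖)]) (sub_lt_sub_left m2 _)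
        (sub_lt_sub_left m1 _) (by linarith [Real.neg_pi_div_two_lt_arctan (a / ‖w‖)]) hc ha

/-- in the punctured space, quasihyperbolic balls of radius `r ∈ (0,λ]`
are close-to-convex, where `λ ≈ 2.97169` is the solution `p ∈ (2,π)` of
`cos √(p²-1) + √(p²-1) sin √(p²-1) = 0`. -/
theorem qh_ball_punctured_close_to_convex (n : ℕ) (hn : 2 ≤ n)
    (y : EuclideanSpace ℝ (Fin n)) (hy : y ≠ 0)
    (lam : ℝ) (hlammem : lam ∈ Ioo 2 Real.pi)
    (hlameq : Real.cos (Real.sqrt (lam ^ 2 - 1)) +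
        Real.sqrt (lam ^ 2 - 1) * Real.sin (Real.sqrt (lam ^ 2 - 1)) = 0)
    (r : ℝ) (hr0 : 0 < r) (hrlam : r ≤ lam) :
    CloseToConvex (qhBall ({0}ᶜ : Set (EuclideanSpace ℝ (Fin n))) y r) := by
  have hy0 : 0 < ‖y‖ := norm_pos_iff.2 hy
  have hperp : ∃ w : EuclideanSpace ℝ (Fin n), w ≠ 0 ∧ inner ℝ y w = 0 := by
    by_contra hcon
    push Not at hcon
    have hbot : (Submodule.span ℝ {y})ᗮ = ⊥ := by
      rw [Submodule.eq_bot_iff]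
      intro w hw
      by_contra hw0
      exact hcon w hw0 (Submodule.mem_orthogonal_singleton_iff_inner_right.1 hw)
    rw [Submodule.orthogonal_eq_bot_iff] at hbot
    have h1 : Module.finrank ℝ (Submodule.span ℝ {y}) = 1 := finrank_span_singleton hy
    rw [hbot, finrank_top, finrank_euclideanSpace_fin] at h1
    omega
  have hyi : 0 < ‖y‖⁻¹ := inv_pos.2 hy0
  have he : ‖‖y‖⁻¹ • y‖ = 1 := by
    rw [norm_smul, Real.norm_of_nonneg hyi.le]; field_simp
  refine ctc_fiber _ (‖y‖⁻¹ • y) he fun w hw => ctc_real _ ?_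
  have := fiber_conv (‖y‖⁻¹ • y) w he hw r (Real.log ‖y‖) hr0 (hrlam.trans_lt hlammem.2)
    (fun u hu => lam_bound lam hlammem hlameq r hrlam u hu)
  convert this using 1
  ext x
  simp only [mem_ofPred_eq]
  rw [mem_qhBall_iff y _ hy hperp r hr0, InnerProductGeometry.angle_smul_left_of_pos _ _ hyi]
end

section
/- Let Ω ⊊ ℝⁿ (n ≥ 2) be a proper subdomain and x ∈ Ω. Then the j-metric ball B_j(x,r) = { y ∈ Ω : j_Ω(x,y) < r } is convex for every r ∈ (0, log 2], and strictly starlike with respect to x for every r ∈ (0, log(1+√2)]. -/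
open Set Metric MeasureTheory

section helpers

open scoped RealInnerProductSpace

variable {F : Type*} [NormedAddCommGroup F] [InnerProductSpace ℝ F]

lemma jb_inter_frontier {X : Type*} [TopologicalSpace X] {s : Set X} (hs : IsPreconnected s)
    {t : Set X} (ht : IsOpen t) (h1 : (s ∩ t).Nonempty) (h2 : (s ∩ tᶜ).Nonempty) :
    (s ∩ frontier t).Nonempty := by
  by_contra hc
  rw [not_nonempty_iff_eq_empty] at hc
  have h : ∀ z ∈ s, z ∉ t → z ∉ closure t := by
    intro z hz hzt hzc
    have : z ∈ s ∩ frontier t := ⟨hz, by rw [ht.frontier_eq]; exact ⟨hzc, hzt⟩⟩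
    rw [hc] at this
    exact this
  obtain ⟨y, hy, hyt⟩ := h2
  obtain ⟨z, -, hz1, hz2⟩ := hs t (closure t)ᶜ ht isClosed_closure.isOpen_compl
    (fun z hz => by
      by_cases hzt : z ∈ t
      · exact Or.inl hzt
      · exact Or.inr (h z hz hzt)) h1 ⟨y, hy, h y hy hyt⟩
  exact hz2 (subset_closure hz1)

lemma jb_star_alg (v w : F) (R s : ℝ) (hR : 0 < R) (hR2 : R ^ 2 ≤ 2) (hs0 : 0 ≤ s) (hs1 : s < 1)
    (hw : 0 < ‖w‖) (h1 : ‖v‖ ≤ R * ‖w‖) (h2 : ‖v‖ ≤ R * ‖v - w‖) :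
    ‖s • v‖ < R * ‖s • v - w‖ := by
  have h1' : ‖v‖ ^ 2 ≤ R ^ 2 * ‖w‖ ^ 2 := by
    rw [← mul_pow]; exact pow_le_pow_left₀ (norm_nonneg _) h1 2
  have h2' : ‖v‖ ^ 2 ≤ R ^ 2 * ‖v - w‖ ^ 2 := by
    rw [← mul_pow]; exact pow_le_pow_left₀ (norm_nonneg _) h2 2
  apply lt_of_pow_lt_pow_left₀ 2 (by positivity)
  rw [mul_pow]
  rw [norm_sub_sq_real] at h2' ⊢
  rw [norm_smul, inner_smul_left, mul_pow, Real.norm_eq_abs, sq_abs]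
  simp only [conj_trivial]
  have hW : 0 < R ^ 2 * ‖w‖ ^ 2 := by positivity
  have hV : 0 ≤ ‖v‖ ^ 2 := by positivity
  generalize ‖v‖ ^ 2 = V at *
  generalize ‖w‖ ^ 2 = W at *
  generalize R ^ 2 = Q at *
  generalize ⟪v, w⟫ = c at *
  have key : s * V * (Q - 1) < Q * W := by
    have h3 : s * V * (Q - 1) ≤ s * V := by
      have := mul_nonneg hs0 hV
      nlinarith
    have h4 : s * V ≤ s * (Q * W) := mul_le_mul_of_nonneg_left h1' hs0
    nlinarith
  have h5 : s * V ≤ s * (Q * (V - 2 * c + W)) := mul_le_mul_of_nonneg_left h2' hs0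
  have h6 : 0 < (1 - s) * (Q * W - s * V * (Q - 1)) := mul_pos (by linarith) (by linarith)
  linarith

lemma jb_conv_alg (u v w : F) (R a b : ℝ) (hR : 0 < R) (hR2 : R ≤ 1) (ha : 0 ≤ a) (hb : 0 ≤ b)
    (hab : a + b = 1) (h1 : ‖u‖ < R * ‖u - w‖) (h2 : ‖v‖ < R * ‖v - w‖) :
    ‖a • u + b • v‖ < R * ‖a • u + b • v - w‖ := by
  have h1' : ‖u‖ ^ 2 < R ^ 2 * ‖u - w‖ ^ 2 := by
    rw [← mul_pow]; exact pow_lt_pow_left₀ h1 (norm_nonneg _) (by norm_num)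
  have h2' : ‖v‖ ^ 2 < R ^ 2 * ‖v - w‖ ^ 2 := by
    rw [← mul_pow]; exact pow_lt_pow_left₀ h2 (norm_nonneg _) (by norm_num)
  apply lt_of_pow_lt_pow_left₀ 2 (by positivity)
  rw [mul_pow]
  have h3 : 0 ≤ ‖u - v‖ ^ 2 := by positivity
  have hQ : R ^ 2 ≤ 1 := pow_le_one₀ hR.le hR2
  rw [norm_sub_sq_real] at h1' h2' h3 ⊢
  rw [norm_add_sq_real, norm_smul, norm_smul, inner_add_left, inner_smul_left, inner_smul_left,
    inner_smul_left, inner_smul_right, mul_pow, mul_pow, Real.norm_eq_abs, Real.norm_eq_abs,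
    sq_abs, sq_abs]
  simp only [conj_trivial]
  generalize ‖u‖ ^ 2 = U at *
  generalize ‖v‖ ^ 2 = V at *
  generalize ‖w‖ ^ 2 = W at *
  generalize R ^ 2 = Q at *
  generalize ⟪u, w⟫ = c at *
  generalize ⟪v, w⟫ = d at *
  generalize ⟪u, v⟫ = e at *
  have h4 : 0 ≤ (a * b) * ((1 - Q) * (U - 2 * e + V)) :=
    mul_nonneg (mul_nonneg ha hb) (mul_nonneg (by linarith) h3)
  have h5 : 0 < a * (Q * (U - 2 * c + W) - U) + b * (Q * (V - 2 * d + W) - V) := by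
    rcases ha.eq_or_lt with h | h
    · have : b = 1 := by linarith
      subst h; subst this; linarith
    · have := mul_pos h (sub_pos.2 h1')
      have := mul_nonneg hb (sub_pos.2 h2').le
      linarith
  obtain rfl : b = 1 - a := by linarith
  linarith

/-- explicit form of the ball -/
def jbA (S : Set F) (x : F) (R : ℝ) : Set F :=
  {y | dist x y < R * infDist x S ∧ dist x y < R * infDist y S}

/-- closed version -/
def jbC (S : Set F) (x : F) (R : ℝ) : Set F :=
  {y | dist x y ≤ R * infDist x S ∧ dist x y ≤ R * infDist y S}

lemma jbA_open (S : Set F) (x : F) (R : ℝ) : IsOpen (jbA S x R) := by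
  have h := continuous_infDist_pt S
  have h1 : IsOpen {y | dist x y < R * infDist x S} := isOpen_lt (by fun_prop) (by fun_prop)
  have h2 : IsOpen {y | dist x y < R * infDist y S} := isOpen_lt (by fun_prop) (by fun_prop)
  exact h1.inter h2

lemma jbC_closed (S : Set F) (x : F) (R : ℝ) : IsClosed (jbC S x R) := by
  have h := continuous_infDist_pt S
  have h1 : IsClosed {y | dist x y ≤ R * infDist x S} := isClosed_le (by fun_prop) (by fun_prop)
  have h2 : IsClosed {y | dist x y ≤ R * infDist y S} := isClosed_le (by fun_prop) (by fun_prop)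
  exact h1.inter h2

lemma jbA_sub_jbC (S : Set F) (x : F) (R : ℝ) : jbA S x R ⊆ jbC S x R :=
  fun _ h => ⟨h.1.le, h.2.le⟩

variable [ProperSpace F]

lemma jb_shrink {S : Set F} (hS : IsClosed S) (hne : S.Nonempty) {x : F} (hx : 0 < infDist x S)
    {R : ℝ} (hR : 0 < R) (hR2 : R ^ 2 ≤ 2) {v : F} (hv : x + v ∈ jbC S x R) {s : ℝ}
    (hs0 : 0 ≤ s) (hs1 : s < 1) : x + s • v ∈ jbA S x R := by
  obtain ⟨h1, h2⟩ := hv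
  simp only [dist_self_add_right] at h1 h2
  constructor
  · simp only [dist_self_add_right]
    rw [norm_smul, Real.norm_eq_abs, abs_of_nonneg hs0]
    have : 0 < R * infDist x S := by positivity
    nlinarith [norm_nonneg v]
  · obtain ⟨p, hp, hpe⟩ := hS.exists_infDist_eq_dist hne (x + s • v)
    have e1 : infDist x S ≤ ‖p - x‖ := by
      have := infDist_le_dist_of_mem (x := x) hp
      rwa [dist_comm, dist_eq_norm] at this
    have e2 : infDist (x + v) S ≤ ‖v - (p - x)‖ := by
      have := infDist_le_dist_of_mem (x := x + v) hp
      rw [dist_eq_norm] at this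
      rwa [show v - (p - x) = x + v - p by abel]
    rw [hpe, dist_self_add_right, dist_eq_norm]
    have := jb_star_alg v (p - x) R s hR hR2 hs0 hs1 (by linarith)
      (h1.trans (by gcongr)) (h2.trans (by gcongr))
    rwa [show x + s • v - p = s • v - (p - x) by abel]

lemma jbA_center {S : Set F} {x : F} (hx : 0 < infDist x S) {R : ℝ} (hR : 0 < R) :
    x ∈ jbA S x R := by
  constructor <;> · rw [dist_self]; positivity

lemma jbA_star {S : Set F} (hS : IsClosed S) (hne : S.Nonempty) {x : F} (hx : 0 < infDist x S)
    {R : ℝ} (hR : 0 < R) (hR2 : R ^ 2 ≤ 2) : StarConvex ℝ x (jbA S x R) := by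
  rw [starConvex_iff_forall_pos (jbA_center hx hR)]
  intro y hy a b ha hb hab
  have := jb_shrink hS hne hx hR hR2 (v := y - x) (s := b)
    (by rw [add_sub_cancel]; exact jbA_sub_jbC _ _ _ hy) hb.le (by linarith)
  convert this using 1
  obtain rfl : a = 1 - b := by linarith
  module

lemma jbA_convex {S : Set F} (hS : IsClosed S) (hne : S.Nonempty) {x : F}
    {R : ℝ} (hR : 0 < R) (hR2 : R ≤ 1) : Convex ℝ (jbA S x R) := by
  intro y hy z hz a b ha hb hab
  constructor
  · have := convex_ball x (R * infDist x S) (x := y) (by rw [mem_ball']; exact hy.1)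
      (y := z) (by rw [mem_ball']; exact hz.1) ha hb hab
    rwa [mem_ball'] at this
  · obtain ⟨p, hp, hpe⟩ := hS.exists_infDist_eq_dist hne (a • y + b • z)
    have e : ∀ y ∈ jbA S x R, ‖y - x‖ < R * ‖(y - x) - (p - x)‖ := by
      intro y hy
      have h1 := hy.2
      have h2 := infDist_le_dist_of_mem (x := y) hp
      rw [dist_comm, dist_eq_norm] at h1
      rw [dist_eq_norm] at h2
      rw [sub_sub_sub_cancel_right]
      exact h1.trans_le (by gcongr)
    have := jb_conv_alg (y - x) (z - x) (p - x) R a b hR hR2 ha hb hab (e y hy) (e z hz)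
    rw [hpe, dist_comm, dist_eq_norm, dist_eq_norm]
    obtain rfl : b = 1 - a := by linarith
    have e1 : a • y + (1 - a) • z - x = a • (y - x) + (1 - a) • (z - x) := by module
    have e2 : a • y + (1 - a) • z - p = a • (y - x) + (1 - a) • (z - x) - (p - x) := by module
    rwa [e1, e2]

lemma jbA_strict [Nontrivial F] {S : Set F} (hS : IsClosed S) (hne : S.Nonempty) {x : F}
    (hx : 0 < infDist x S)
    {R : ℝ} (hR : 0 < R) (hR2 : R ^ 2 ≤ 2) : StrictlyStarlike (jbA S x R) x := by
  refine ⟨jbA_star hS hne hx hR hR2, fun v hv => ?_⟩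
  have hvpos : 0 < ‖v‖ := norm_pos_iff.2 hv
  have hfr : ∀ q, q ∈ frontier (jbA S x R) → q ∉ jbA S x R := by
    intro q hq hq'
    rw [(jbA_open S x R).frontier_eq] at hq
    exact hq.2 hq'
  have huniq : ∀ t t' : ℝ, 0 < t → t < t' → x + t • v ∈ frontier (jbA S x R) →
      x + t' • v ∈ frontier (jbA S x R) → False := by
    intro t t' ht htt h1 h2
    have h3 : x + t' • v ∈ jbC S x R :=
      closure_minimal (jbA_sub_jbC S x R) (jbC_closed S x R) (frontier_subset_closure h2)
    have ht' : 0 < t' := ht.trans htt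
    have := jb_shrink hS hne hx hR hR2 h3 (s := t / t') (by positivity)
      (by rw [div_lt_one ht']; exact htt)
    rw [smul_smul, div_mul_cancel₀ _ ht'.ne'] at this
    exact hfr _ h1 this
  have hconn : IsPreconnected ((fun t : ℝ => x + t • v) '' Ici 0) :=
    isPreconnected_Ici.image _ (by fun_prop)
  obtain ⟨q, ⟨t, ht, rfl⟩, hq⟩ := jb_inter_frontier hconn (jbA_open S x R)
    ⟨x, ⟨0, by simp, by simp⟩, jbA_center hx hR⟩ (by
      refine ⟨x + (R * infDist x S / ‖v‖) • v, ⟨_, ?_, rfl⟩, ?_⟩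
      · simp only [mem_Ici]; positivity
      · intro h
        have h1 := h.1
        rw [dist_self_add_right, norm_smul, Real.norm_eq_abs, abs_of_nonneg (by positivity),
          div_mul_cancel₀ _ hvpos.ne'] at h1
        exact lt_irrefl _ h1)
  have htpos : 0 < t := by
    rcases (show (0:ℝ) ≤ t from ht).eq_or_lt with h | h
    · subst h
      exact absurd (by simpa using jbA_center hx hR) (hfr _ hq)
    · exact h
  refine ⟨x + t • v, ⟨hq, t, htpos, rfl⟩, ?_⟩
  rintro _ ⟨hq', t', ht', rfl⟩
  rcases lt_trichotomy t t' with h | h | h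
  · exact (huniq _ _ htpos h hq hq').elim
  · rw [h]
  · exact (huniq _ _ ht' h hq' hq).elim

lemma jBall_eq_jbA {Ω : Set F} (hopen : IsOpen Ω) (hne : (frontier Ω).Nonempty) {x : F}
    (hx : x ∈ Ω) {r : ℝ} (hr : 0 < r) (hR2 : (Real.exp r - 1) ^ 2 ≤ 2) :
    jBall Ω x r = jbA (frontier Ω) x (Real.exp r - 1) := by
  have hpos : ∀ y ∈ Ω, 0 < infDist y (frontier Ω) := by
    intro y hy
    rw [← isClosed_frontier.notMem_iff_infDist_pos hne, hopen.frontier_eq]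
    exact fun h => h.2 hy
  have hR : 0 < Real.exp r - 1 := by
    have := Real.add_one_lt_exp hr.ne'
    linarith
  have key : ∀ y ∈ Ω, (jDist Ω x y < r ↔ y ∈ jbA (frontier Ω) x (Real.exp r - 1)) := by
    intro y hy
    have hx0 := hpos x hx
    have hy0 := hpos y hy
    have hm : 0 < min (infDist x (frontier Ω)) (infDist y (frontier Ω)) := lt_min hx0 hy0
    unfold jDist jbA
    rw [Real.log_lt_iff_lt_exp (by positivity), ← lt_sub_iff_add_lt', div_lt_iff₀ hm,
      mul_min_of_nonneg _ _ hR.le, lt_min_iff]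
    rfl
  ext y
  constructor
  · rintro ⟨h1, h2⟩
    exact (key y h1).1 h2
  · intro h
    suffices hy : y ∈ Ω from ⟨hy, (key y hy).2 h⟩
    by_contra hy
    have hst := jbA_star isClosed_frontier hne (hpos x hx) hR hR2
    obtain ⟨q, hq, hqf⟩ := jb_inter_frontier (convex_segment (𝕜 := ℝ) x y).isPreconnected
      hopen ⟨x, left_mem_segment ℝ x y, hx⟩ ⟨y, right_mem_segment ℝ x y, hy⟩
    have := ((starConvex_iff_segment_subset.1 hst) h hq).2
    rw [infDist_zero_of_mem hqf, mul_zero] at this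
    exact absurd this (not_lt.2 dist_nonneg)

end helpers

/-- in any proper subdomain of `ℝⁿ`, `j`-metric balls are convex for
radii `r ≤ log 2` and strictly starlike with respect to their center for radii
`r ≤ log(1+√2)`. -/
theorem j_ball_convex_starlike (n : ℕ) (hn : 2 ≤ n)
    (Ω : Set (EuclideanSpace ℝ (Fin n)))
    (hopen : IsOpen Ω) (hconn : IsConnected Ω) (hproper : Ω ≠ univ)
    (x : EuclideanSpace ℝ (Fin n)) (hx : x ∈ Ω) (r : ℝ) (hr0 : 0 < r) :
    (r ≤ Real.log 2 → Convex ℝ (jBall Ω x r)) ∧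
      (r ≤ Real.log (1 + Real.sqrt 2) → StrictlyStarlike (jBall Ω x r) x) := by
  have : Nonempty (Fin n) := ⟨⟨0, by omega⟩⟩
  have hne : (frontier Ω).Nonempty :=
    nonempty_frontier_iff.2 ⟨⟨x, hx⟩, hproper⟩
  have hpos : 0 < infDist x (frontier Ω) := by
    rw [← isClosed_frontier.notMem_iff_infDist_pos hne, hopen.frontier_eq]
    exact fun h => h.2 hx
  have hR : 0 < Real.exp r - 1 := by
    have := Real.add_one_lt_exp hr0.ne'
    linarith
  constructor
  · intro hr
    have h1 : Real.exp r ≤ 2 := (Real.le_log_iff_exp_le (by norm_num)).1 hr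
    rw [jBall_eq_jbA hopen hne hx hr0 (by nlinarith)]
    exact jbA_convex isClosed_frontier hne hR (by linarith)
  · intro hr
    have h1 : Real.exp r ≤ 1 + Real.sqrt 2 := (Real.le_log_iff_exp_le (by positivity)).1 hr
    have h2 : (Real.exp r - 1) ^ 2 ≤ 2 := by
      have := pow_le_pow_left₀ hR.le (show Real.exp r - 1 ≤ Real.sqrt 2 by linarith) 2
      rwa [Real.sq_sqrt (by norm_num)] at this
    rw [jBall_eq_jbA hopen hne hx hr0 h2]
    exact jbA_strict isClosed_frontier hne hpos hR h2
end

section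
/- Let Ω ⊊ ℝⁿ (n ≥ 2) be a convex proper subdomain and x ∈ Ω. Then for every r > 0 the j-metric ball B_j(x,r) is convex. -/
open Set Metric MeasureTheory

theorem aux_ball_sub {E : Type*} [NormedAddCommGroup E] [NormedSpace ℝ E] (Ω : Set E)
    (ho : IsOpen Ω) (y : E) (hy : y ∈ Ω) : ball y (infDist y (frontier Ω)) ⊆ Ω := by
  intro p hp
  by_contra hpn
  have hpos : 0 < infDist y (frontier Ω) := lt_of_le_of_lt dist_nonneg hp
  have hc : IsPreconnected (ball y (infDist y (frontier Ω))) :=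
    (convex_ball y _).isPreconnected
  have hnf : ∀ q ∈ ball y (infDist y (frontier Ω)), q ∉ frontier Ω := by
    intro q hq hqf
    have h1 := infDist_le_dist_of_mem (x := y) hqf
    rw [mem_ball, dist_comm] at hq
    linarith
  have hcl : ∀ q ∈ ball y (infDist y (frontier Ω)), q ∉ Ω → q ∈ (closure Ω)ᶜ := by
    intro q hq hqn hqc
    apply hnf q hq
    rw [ho.frontier_eq]
    exact ⟨hqc, hqn⟩
  obtain ⟨q, _, hq1, hq2⟩ := hc Ω (closure Ω)ᶜ ho isClosed_closure.isOpen_compl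
    (fun q hq => or_iff_not_imp_left.2 (hcl q hq))
    ⟨y, mem_ball_self hpos, hy⟩ ⟨p, hp, hcl p hp hpn⟩
  exact hq2 (subset_closure hq1)

theorem aux_pos {E : Type*} [NormedAddCommGroup E] [NormedSpace ℝ E] (Ω : Set E)
    (ho : IsOpen Ω) (hf : (frontier Ω).Nonempty)
    (y : E) (hy : y ∈ Ω) : 0 < infDist y (frontier Ω) := by
  refine (isClosed_frontier.notMem_iff_infDist_pos hf).1 fun h => ?_
  rw [ho.frontier_eq] at h
  exact h.2 hy

theorem aux_concave {E : Type*} [NormedAddCommGroup E] [NormedSpace ℝ E] (Ω : Set E)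
    (ho : IsOpen Ω) (hf : (frontier Ω).Nonempty) (hc : Convex ℝ Ω)
    (y z : E) (hy : y ∈ Ω) (hz : z ∈ Ω) (a b : ℝ) (ha : 0 ≤ a) (hb : 0 ≤ b) (hab : a + b = 1) :
    a * infDist y (frontier Ω) + b * infDist z (frontier Ω)
      ≤ infDist (a • y + b • z) (frontier Ω) := by
  have hdy := aux_pos Ω ho hf y hy
  have hdz := aux_pos Ω ho hf z hz
  have sy := aux_ball_sub Ω ho y hy
  have sz := aux_ball_sub Ω ho z hz
  set dy := infDist y (frontier Ω)
  set dz := infDist z (frontier Ω)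
  rw [le_infDist hf]
  intro p hp
  by_contra! hlt
  obtain ⟨R, hR⟩ : ∃ R, R = a * dy + b * dz := ⟨_, rfl⟩
  rw [← hR, dist_eq_norm, norm_sub_rev] at hlt
  have hRpos : 0 < R := lt_of_le_of_lt (norm_nonneg _) hlt
  obtain ⟨u, hu⟩ : ∃ u, u = p - (a • y + b • z) := ⟨_, rfl⟩
  rw [← hu] at hlt
  have key : ∀ (q : E) (d : ℝ), 0 < d → q + (d / R) • u ∈ ball q d := by
    intro q d hd
    rw [mem_ball, dist_eq_norm, add_sub_cancel_left, norm_smul, Real.norm_of_nonneg (by positivity),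
      div_mul_eq_mul_div, div_lt_iff₀ hRpos]
    exact mul_lt_mul_of_pos_left hlt hd
  have hm := hc (sy (key y dy hdy)) (sz (key z dz hdz)) ha hb hab
  have he : a • (y + (dy / R) • u) + b • (z + (dz / R) • u) = p := by
    have h1 : a * (dy / R) + b * (dz / R) = 1 := by
      field_simp
      exact hR.symm
    calc _ = (a • y + b • z) + (a * (dy / R) + b * (dz / R)) • u := by module
      _ = p := by rw [h1, hu]; module
  rw [he] at hm
  rw [ho.frontier_eq] at hp
  exact hp.2 hm

/-- in a convex proper subdomain of `ℝⁿ`, all `j`-metric balls are convex. -/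
theorem j_ball_convex_of_convex_domain (n : ℕ) (hn : 2 ≤ n)
    (Ω : Set (EuclideanSpace ℝ (Fin n)))
    (hopen : IsOpen Ω) (hne : Ω.Nonempty) (hconv : Convex ℝ Ω) (hproper : Ω ≠ univ)
    (x : EuclideanSpace ℝ (Fin n)) (hx : x ∈ Ω) (r : ℝ) (hr : 0 < r) :
    Convex ℝ (jBall Ω x r) := by
  have hf : (frontier Ω).Nonempty := nonempty_frontier_iff.2 ⟨hne, hproper⟩
  have hdx := aux_pos Ω hopen hf x hx
  have hiff : ∀ y ∈ Ω, (jDist Ω x y < r ↔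
      dist x y < (Real.exp r - 1) * infDist x (frontier Ω) ∧
      dist x y < (Real.exp r - 1) * infDist y (frontier Ω)) := by
    intro y hy
    have hdy := aux_pos Ω hopen hf y hy
    have hm : 0 < min (infDist x (frontier Ω)) (infDist y (frontier Ω)) := lt_min hdx hdy
    have hc : 0 < Real.exp r - 1 := by
      have := Real.add_one_lt_exp hr.ne'
      linarith
    unfold jDist
    rw [Real.log_lt_iff_lt_exp (by positivity), ← lt_sub_iff_add_lt', div_lt_iff₀ hm,
      mul_min_of_nonneg _ _ hc.le, lt_min_iff]
  have hc : 0 < Real.exp r - 1 := by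
    have := Real.add_one_lt_exp hr.ne'
    linarith
  rintro y ⟨hy, hyr⟩ z ⟨hz, hzr⟩ a b ha hb hab
  have hw := hconv hy hz ha hb hab
  refine ⟨hw, (hiff _ hw).2 ?_⟩
  obtain ⟨y1, y2⟩ := (hiff y hy).1 hyr
  obtain ⟨z1, z2⟩ := (hiff z hz).1 hzr
  have hconc := aux_concave Ω hopen hf hconv y z hy hz a b ha hb hab
  have hd : dist x (a • y + b • z) ≤ a * dist x y + b * dist x z := by
    have : x - (a • y + b • z) = a • (x - y) + b • (x - z) := by
      have : x = (a + b) • x := by rw [hab, one_smul]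
      nth_rewrite 1 [this]
      module
    rw [dist_eq_norm, dist_eq_norm, dist_eq_norm, this]
    refine (norm_add_le _ _).trans ?_
    rw [norm_smul, norm_smul, Real.norm_of_nonneg ha, Real.norm_of_nonneg hb]
  have comb : ∀ s t S T : ℝ, s < S → t < T → a * s + b * t < a * S + b * T := by
    intro s t S T h1 h2
    rcases ha.eq_or_lt with h | h
    · have : b = 1 := by linarith
      subst this
      rw [← h]
      linarith
    · have := mul_lt_mul_of_pos_left h1 h
      have := mul_le_mul_of_nonneg_left h2.le hb
      linarith
  constructor
  · have := comb _ _ _ _ y1 z1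
    rw [← add_mul, hab, one_mul] at this
    linarith
  · have := comb _ _ _ _ y2 z2
    have := mul_le_mul_of_nonneg_left hconc hc.le
    linarith
end

section
/- Let Ω ⊊ ℝⁿ (n ≥ 2) be a domain that is starlike with respect to a point x ∈ Ω. Then for every r > 0 the j-metric ball B_j(x,r) is starlike with respect to x. -/
open Set Metric MeasureTheory

/-- if `Ω` is starlike with respect to `x`, then every `j`-metric ball
centered at `x` is starlike with respect to `x`. -/
theorem j_ball_starlike_of_starlike (n : ℕ) (hn : 2 ≤ n)
    (Ω : Set (EuclideanSpace ℝ (Fin n)))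
    (hopen : IsOpen Ω) (hconn : IsConnected Ω) (hproper : Ω ≠ univ)
    (x : EuclideanSpace ℝ (Fin n)) (hx : x ∈ Ω) (hstar : StarConvex ℝ x Ω)
    (r : ℝ) (hr : 0 < r) :
    StarConvex ℝ x (jBall Ω x r) := by
  have hne : (frontier Ω).Nonempty := by
    rw [nonempty_frontier_iff]
    exact ⟨⟨x, hx⟩, hproper⟩
  have hpos : ∀ y ∈ Ω, 0 < infDist y (frontier Ω) := by
    intro y hy
    rw [← isClosed_frontier.notMem_iff_infDist_pos hne]
    intro h
    rw [hopen.frontier_eq] at h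
    exact h.2 hy
  have hball : ∀ y ∈ Ω, ∀ q, q ∉ Ω → infDist y (frontier Ω) ≤ dist y q := by
    intro y hy q hq
    have hc : IsPreconnected (segment ℝ y q) := (convex_segment y q).isPreconnected
    obtain ⟨w, hw, hwf⟩ : ∃ w ∈ segment ℝ y q, w ∈ frontier Ω := by
      by_contra! hcon
      rw [hopen.frontier_eq] at hcon
      have hcl : ∀ w ∈ segment ℝ y q, w ∉ Ω → w ∈ (closure Ω)ᶜ :=
        fun w hw h h' => hcon w hw ⟨h', h⟩
      obtain ⟨w, -, hw1, hw2⟩ := hc Ω (closure Ω)ᶜ hopen isClosed_closure.isOpen_compl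
        (fun w hw => (em (w ∈ Ω)).imp id (hcl w hw))
        ⟨y, left_mem_segment ℝ y q, hy⟩
        ⟨q, right_mem_segment ℝ y q, hcl q (right_mem_segment ℝ y q) hq⟩
      exact hw2 (subset_closure hw1)
    refine (infDist_le_dist_of_mem hwf).trans ?_
    have := dist_add_dist_of_mem_segment hw
    have := dist_nonneg (x := w) (y := q)
    linarith
  have hxb : x ∈ jBall Ω x r := ⟨hx, by simpa [jDist] using hr⟩
  rw [starConvex_iff_forall_pos hxb]
  rintro y ⟨hy, hyr⟩ a t ha ht hat
  have hz : a • x + t • y ∈ Ω := hstar hy ha.le ht.le hat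
  refine ⟨hz, lt_of_le_of_lt ?_ hyr⟩
  have hdx := hpos x hx
  have hdy := hpos y hy
  have hdz := hpos _ hz
  have key : t * infDist y (frontier Ω) ≤ infDist (a • x + t • y) (frontier Ω) := by
    rw [le_infDist hne]
    intro p hp
    have hq : y + t⁻¹ • (p - (a • x + t • y)) ∉ Ω := by
      intro h
      have h2 := hstar h ha.le ht.le hat
      rw [smul_add, smul_smul, mul_inv_cancel₀ ht.ne', one_smul] at h2
      rw [hopen.frontier_eq] at hp
      apply hp.2
      convert h2 using 1
      abel
    have h3 := hball y hy _ hq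
    rw [dist_self_add_right, norm_smul, norm_inv, Real.norm_of_nonneg ht.le,
      ← dist_eq_norm, dist_comm] at h3
    calc _ ≤ t * (t⁻¹ * dist (a • x + t • y) p) := by gcongr
      _ = _ := by field_simp
  have hd : dist x (a • x + t • y) = t * dist x y := by
    have : x - (a • x + t • y) = t • (x - y) := by
      obtain rfl : a = 1 - t := by linarith
      module
    rw [dist_eq_norm, this, norm_smul, Real.norm_of_nonneg ht.le, dist_eq_norm]
  unfold jDist
  have hm := lt_min hdx hdy
  have hm' := lt_min hdx hdz
  have hle : t * min (infDist x (frontier Ω)) (infDist y (frontier Ω)) ≤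
      min (infDist x (frontier Ω)) (infDist (a • x + t • y) (frontier Ω)) := by
    apply le_min
    · have := min_le_left (infDist x (frontier Ω)) (infDist y (frontier Ω))
      nlinarith
    · exact (mul_le_mul_of_nonneg_left (min_le_right _ _) ht.le).trans key
  apply Real.log_le_log (by positivity)
  rw [hd]
  gcongr 1 + ?_
  rw [div_le_div_iff₀ hm' hm]
  have := mul_le_mul_of_nonneg_left hle (dist_nonneg (x := x) (y := y))
  linarith
end

section
/- Let Ω ⊊ ℝⁿ (n ≥ 2) be any proper subdomain. Then the metric space (Ω, j_Ω) is not geodesic: there exist points x, y ∈ Ω with x ≠ y such that there is no isometric embedding γ : [0, j_Ω(x,y)] → (Ω, j_Ω) with γ(0) = x and γ(j_Ω(x,y)) = y. -/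
open Set Metric MeasureTheory

/-- the metric space `(Ω, j_Ω)` is never geodesic. -/
theorem j_metric_not_geodesic (n : ℕ) (hn : 2 ≤ n)
    (Ω : Set (EuclideanSpace ℝ (Fin n)))
    (hopen : IsOpen Ω) (hconn : IsConnected Ω) (hproper : Ω ≠ univ) :
    ∃ x ∈ Ω, ∃ y ∈ Ω, x ≠ y ∧
      ¬ ∃ γ : ℝ → EuclideanSpace ℝ (Fin n),
          MapsTo γ (Icc 0 (jDist Ω x y)) Ω ∧
          γ 0 = x ∧ γ (jDist Ω x y) = y ∧
          ∀ s ∈ Icc 0 (jDist Ω x y), ∀ t ∈ Icc 0 (jDist Ω x y),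
            jDist Ω (γ s) (γ t) = |s - t| := by
  have hfne : (frontier Ω).Nonempty := nonempty_frontier_iff.2 ⟨hconn.nonempty, hproper⟩
  have hpos : ∀ z ∈ Ω, 0 < infDist z (frontier Ω) := by
    intro z hz
    refine (isClosed_frontier.notMem_iff_infDist_pos hfne).1 ?_
    rw [hopen.frontier_eq]
    exact fun h => h.2 hz
  obtain ⟨x, hx, y, hy, hxy, hd⟩ : ∃ x ∈ Ω, ∃ y ∈ Ω, x ≠ y ∧
      infDist x (frontier Ω) = infDist y (frontier Ω) := by
    obtain ⟨p, hp⟩ := hconn.nonempty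
    obtain ⟨r, hr, hball⟩ := Metric.isOpen_iff.1 hopen p hp
    have hrank : 1 < Module.rank ℝ (EuclideanSpace ℝ (Fin n)) := by
      rw [← Module.finrank_eq_rank]
      rw [finrank_euclideanSpace_fin]
      exact_mod_cast hn
    have hS := isPreconnected_sphere hrank (0 : EuclideanSpace ℝ (Fin n)) (r / 2)
    haveI : Nontrivial (EuclideanSpace ℝ (Fin n)) :=
      (rank_pos_iff_nontrivial (R := ℝ)).1 (lt_trans zero_lt_one hrank)
    obtain ⟨v, hv⟩ := (NormedSpace.sphere_nonempty (x := (0 : EuclideanSpace ℝ (Fin n)))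
      (r := r / 2)).2 (by positivity)
    let g : EuclideanSpace ℝ (Fin n) → ℝ := fun w =>
      infDist (p + w) (frontier Ω) - infDist (p - w) (frontier Ω)
    have hg : Continuous g :=
      ((continuous_infDist_pt _).comp (by fun_prop)).sub
        ((continuous_infDist_pt _).comp (by fun_prop))
    have hodd : g (-v) = - g v := by
      simp only [g, sub_neg_eq_add, ← sub_eq_add_neg, neg_sub]
    have hv' : -v ∈ sphere (0 : EuclideanSpace ℝ (Fin n)) (r / 2) := by
      simpa using hv
    have h0 : ∃ w ∈ sphere (0 : EuclideanSpace ℝ (Fin n)) (r / 2), g w = 0 := by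
      rcases le_total (g v) 0 with h | h
      · exact hS.intermediate_value hv hv' hg.continuousOn ⟨h, by linarith⟩
      · exact hS.intermediate_value hv' hv hg.continuousOn ⟨by linarith, h⟩
    obtain ⟨w, hw, hgw⟩ := h0
    have hwn : ‖w‖ = r / 2 := by simpa using hw
    refine ⟨p + w, hball ?_, p - w, hball ?_, ?_, sub_eq_zero.1 hgw⟩
    · simp [hwn]; linarith
    · simp [mem_ball, dist_eq_norm, hwn]; linarith
    · intro h
      have h2 : (2 : ℝ) • w = 0 := by
        rw [two_smul]
        have := congrArg (fun z => z - p + w) h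
        simpa using this
      have : w = 0 := by simpa using h2
      rw [this] at hwn
      simp at hwn
      linarith
  refine ⟨x, hx, y, hy, hxy, ?_⟩
  rintro ⟨γ, hmap, h0, h1, hiso⟩
  have hdx := hpos x hx
  have hdist : 0 < dist x y := dist_pos.2 hxy
  have hJ : jDist Ω x y = Real.log (1 + dist x y / infDist x (frontier Ω)) := by
    simp [jDist, ← hd]
  have hJpos : 0 < jDist Ω x y := by
    rw [hJ]
    apply Real.log_pos
    have := div_pos hdist hdx
    linarith
  set J := jDist Ω x y with hJdef
  have m0 : (0 : ℝ) ∈ Icc 0 J := ⟨le_rfl, hJpos.le⟩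
  have m1 : J ∈ Icc 0 J := ⟨hJpos.le, le_rfl⟩
  have m2 : J / 2 ∈ Icc 0 J := ⟨by linarith, by linarith⟩
  have e1 := hiso 0 m0 (J / 2) m2
  have e2 := hiso (J / 2) m2 J m1
  rw [h0, abs_of_neg (by linarith)] at e1
  rw [h1, abs_of_neg (by linarith)] at e2
  have hz := hpos _ (hmap m2)
  set z := γ (J / 2) with hzdef
  set d := infDist x (frontier Ω) with hddef
  have hxz : 0 < dist x z := by
    rw [dist_pos]
    intro h
    rw [← h] at e1
    simp [jDist] at e1
    linarith
  have hzy : 0 < dist z y := by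
    rw [dist_pos]
    intro h
    rw [h] at e2
    simp [jDist] at e2
    linarith
  have a0 := div_pos hxz hdx
  have b0 := div_pos hzy hdx
  have f1 : Real.log (1 + dist x z / d) ≤ J / 2 := by
    have : Real.log (1 + dist x z / d) ≤ jDist Ω x z := by
      unfold jDist
      apply Real.log_le_log (by linarith)
      gcongr
      exact min_le_left _ _
    linarith
  have f2 : Real.log (1 + dist z y / d) ≤ J / 2 := by
    have : Real.log (1 + dist z y / d) ≤ jDist Ω z y := by
      unfold jDist
      rw [← hd]
      apply Real.log_le_log (by linarith)
      gcongr
      exact min_le_right _ _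
    linarith
  have f3 : Real.log (1 + dist x y / d) <
      Real.log ((1 + dist x z / d) * (1 + dist z y / d)) := by
    apply Real.log_lt_log
    · have := div_pos hdist hdx
      linarith
    · have t : dist x y / d ≤ dist x z / d + dist z y / d := by
        rw [← add_div]
        gcongr
        exact dist_triangle _ _ _
      nlinarith [mul_pos a0 b0]
  rw [Real.log_mul (by linarith) (by linarith)] at f3
  linarith
end

section
/- Let Ω ⊊ ℝⁿ (n ≥ 2) be a convex proper subdomain. Then for every x ∈ Ω and every r > 0 the quasihyperbolic ball B_k(x,r) is strictly convex. -/
open Set Metric MeasureTheory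

section QH

variable {E : Type*} [NormedAddCommGroup E] [InnerProductSpace ℝ E] [FiniteDimensional ℝ E]

structure QDom (Ω : Set E) : Prop where
  isOpen : IsOpen Ω
  conv : Convex ℝ Ω
  fne : (frontier Ω).Nonempty

lemma QDom.disj {Ω : Set E} (h : QDom Ω) {p : E} (hp : p ∈ Ω) : p ∉ frontier Ω := by
  rw [h.isOpen.frontier_eq]; exact fun hh => hh.2 hp

lemma QDom.pos {Ω : Set E} (h : QDom Ω) {p : E} (hp : p ∈ Ω) :
    0 < infDist p (frontier Ω) :=
  (isClosed_frontier.notMem_iff_infDist_pos h.fne).1 (h.disj hp)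

lemma QDom.ball_sub {Ω : Set E} (h : QDom Ω) {p : E} (hp : p ∈ Ω) :
    ball p (infDist p (frontier Ω)) ⊆ Ω := by
  have hd : Disjoint (frontier Ω) (ball p (infDist p (frontier Ω))) :=
    (disjoint_ball_infDist).symm
  have hc := isClopen_preimage_val h.isOpen hd
  have : PreconnectedSpace (ball p (infDist p (frontier Ω))) :=
    Subtype.preconnectedSpace (convex_ball _ _).isPreconnected
  have := hc.eq_univ ⟨⟨p, mem_ball_self (h.pos hp)⟩, hp⟩
  intro q hq
  have h2 : (⟨q, hq⟩ : ball p (infDist p (frontier Ω))) ∈ (Subtype.val ⁻¹' Ω : Set _) := by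
    rw [this]; trivial
  exact h2

lemma QDom.concave {Ω : Set E} (h : QDom Ω) {p q : E} (hp : p ∈ Ω) (hq : q ∈ Ω)
    {a b : ℝ} (ha : 0 ≤ a) (hb : 0 ≤ b) (hab : a + b = 1) :
    a * infDist p (frontier Ω) + b * infDist q (frontier Ω) ≤
      infDist (a • p + b • q) (frontier Ω) := by
  have h1 := h.pos hp
  have h2 := h.pos hq
  set d := infDist p (frontier Ω) with hd
  set e := infDist q (frontier Ω) with he
  have hpos : 0 < a * d + b * e := by
    rcases ha.eq_or_lt with rfl | ha'
    · have : b = 1 := by linarith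
      subst this; simpa using h2
    · have := mul_pos ha' h1
      have := mul_nonneg hb h2.le
      linarith
  rw [le_infDist h.fne]
  intro w hw
  by_contra! hlt
  rw [dist_comm, dist_eq_norm] at hlt
  set m := a * d + b * e
  set u : E := m⁻¹ • (w - (a • p + b • q)) with hu
  have hun : ‖u‖ < 1 := by
    rw [hu, norm_smul, Real.norm_of_nonneg (by positivity), inv_mul_lt_iff₀ hpos]
    simpa using hlt
  have hw' : w = a • (p + d • u) + b • (q + e • u) := by
    have : m • u = w - (a • p + b • q) := by
      rw [hu, smul_inv_smul₀ hpos.ne']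
    have h3 : a • (p + d • u) + b • (q + e • u) = (a • p + b • q) + m • u := by
      simp only [m]; module
    rw [h3, this]; abel
  have m1 : p + d • u ∈ Ω := by
    apply h.ball_sub hp
    rw [mem_ball, dist_eq_norm, add_sub_cancel_left, norm_smul, Real.norm_of_nonneg h1.le]
    nlinarith
  have m2 : q + e • u ∈ Ω := by
    apply h.ball_sub hq
    rw [mem_ball, dist_eq_norm, add_sub_cancel_left, norm_smul, Real.norm_of_nonneg h2.le]
    nlinarith
  have : w ∈ Ω := by rw [hw']; exact h.conv m1 m2 ha hb hab
  exact h.disj this hw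

lemma qh_integrable_deriv {γ : ℝ → E} {K : NNReal} (hl : LipschitzOnWith K γ (Icc 0 1)) :
    IntervalIntegrable (fun t => ‖deriv γ t‖) volume 0 1 := by
  rw [intervalIntegrable_iff_integrableOn_Ioo_of_le zero_le_one]
  borelize E
  apply Measure.integrableOn_of_bounded (M := K)
  · simp
  · exact (measurable_deriv γ).norm.aestronglyMeasurable
  · filter_upwards [self_mem_ae_restrict measurableSet_Ioo] with t ht
    rw [norm_norm]
    exact norm_deriv_le_of_lipschitzOn (Icc_mem_nhds ht.1 ht.2) hl

lemma QDom.contd {Ω : Set E} {x y : E} {γ : ℝ → E}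
    (hγ : IsRectPath Ω x y γ) :
    ContinuousOn (fun t => infDist (γ t) (frontier Ω)) (Icc 0 1) := by
  obtain ⟨⟨K, hl⟩, -⟩ := hγ
  exact (continuous_infDist_pt _).comp_continuousOn hl.continuousOn

lemma QDom.integrable {Ω : Set E} (h : QDom Ω) {x y : E} {γ : ℝ → E}
    (hγ : IsRectPath Ω x y γ) :
    IntervalIntegrable (fun t => ‖deriv γ t‖ / infDist (γ t) (frontier Ω)) volume 0 1 := by
  have hc := QDom.contd hγ
  obtain ⟨⟨K, hl⟩, hm, -⟩ := hγ
  simp only [div_eq_mul_inv]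
  apply (qh_integrable_deriv hl).mul_continuousOn
  rw [uIcc_of_le zero_le_one]
  exact hc.inv₀ fun t ht => (h.pos (hm ht)).ne'

lemma qhLength_nonneg (Ω : Set E) (γ : ℝ → E) : 0 ≤ qhLength Ω γ :=
  intervalIntegral.integral_nonneg zero_le_one fun t _ => div_nonneg (norm_nonneg _) infDist_nonneg

lemma qhDist_le {Ω : Set E} {x y : E} {γ : ℝ → E} (hγ : IsRectPath Ω x y γ) :
    qhDist Ω x y ≤ qhLength Ω γ := by
  apply csInf_le
  · exact ⟨0, by rintro _ ⟨γ, -, rfl⟩; exact qhLength_nonneg Ω γ⟩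
  · exact ⟨γ, hγ, rfl⟩

lemma QDom.segPath {Ω : Set E} (h : QDom Ω) {x y : E} (hx : x ∈ Ω) (hy : y ∈ Ω) :
    IsRectPath Ω x y (fun t => x + t • (y - x)) := by
  refine ⟨⟨‖y - x‖₊, ?_⟩, ?_, by simp, by simp⟩
  · apply LipschitzOnWith.of_dist_le_mul
    intro s _ t _
    rw [dist_add_left, dist_eq_norm, ← sub_smul, norm_smul, mul_comm, dist_eq_norm]
    rfl
  · intro t ht
    exact h.conv.add_smul_sub_mem hx hy ht

lemma QDom.exists_path {Ω : Set E} (h : QDom Ω) {x y : E} (hx : x ∈ Ω) (hy : y ∈ Ω) {r : ℝ}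
    (hr : qhDist Ω x y < r) : ∃ γ, IsRectPath Ω x y γ ∧ qhLength Ω γ < r := by
  obtain ⟨_, ⟨γ, hγ, rfl⟩, hl⟩ := exists_lt_of_csInf_lt
    (Set.Nonempty.image (qhLength Ω) ⟨_, h.segPath hx hy⟩) hr
  exact ⟨γ, hγ, hl⟩

lemma QDom.seg_bound {Ω : Set E} (h : QDom Ω) {x y : E} (hx : x ∈ Ω) (hy : y ∈ Ω) {k : ℝ}
    (hk : k < 1) (hxy : ‖y - x‖ ≤ k * infDist x (frontier Ω)) :
    qhDist Ω x y ≤ k / (1 - k) := by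
  refine (qhDist_le (h.segPath hx hy)).trans ?_
  have hd := h.pos hx
  set d := infDist x (frontier Ω) with hd'
  have hk0 : 0 ≤ k := by
    by_contra! hh
    have := norm_nonneg (y - x)
    nlinarith
  have : (k / (1 - k)) = ∫ t in (0:ℝ)..1, (k / (1 - k)) := by simp
  rw [this]
  unfold qhLength
  apply intervalIntegral.integral_mono_on zero_le_one (h.integrable (h.segPath hx hy)) (by simp)
  intro t ht
  have hder : deriv (fun t : ℝ => x + t • (y - x)) t = y - x := by
    have : HasDerivAt (fun t : ℝ => x + t • (y - x)) ((1:ℝ) • (y - x)) t :=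
      ((hasDerivAt_id t).smul_const (y - x)).const_add x
    simpa using this.deriv
  rw [hder]
  have hlow : (1 - k) * d ≤ infDist (x + t • (y - x)) (frontier Ω) := by
    have h1 : d ≤ infDist (x + t • (y - x)) (frontier Ω) + dist x (x + t • (y - x)) :=
      infDist_le_infDist_add_dist
    have h2 : dist x (x + t • (y - x)) ≤ k * d := by
      rw [dist_self_add_right, norm_smul, Real.norm_of_nonneg ht.1]
      have := norm_nonneg (y - x)
      nlinarith [ht.2]
    linarith
  have hp : 0 < (1 - k) * d := mul_pos (by linarith) hd
  calc _ ≤ (k * d) / ((1 - k) * d) := by gcongr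
    _ = k / (1 - k) := by rw [mul_div_mul_right _ _ hd.ne']

lemma QDom.concat {Ω : Set E} (h : QDom Ω) {x y z : E} {γ₁ γ₂ : ℝ → E}
    (h₁ : IsRectPath Ω x y γ₁) (h₂ : IsRectPath Ω y z γ₂) :
    qhDist Ω x z ≤ qhLength Ω γ₁ + qhLength Ω γ₂ := by
  set c : ℝ → E := fun t => if t ≤ 1/2 then γ₁ (2 * t) else γ₂ (2 * t - 1) with hc
  have hc1 : ∀ t, t ≤ 1/2 → c t = γ₁ (2 * t) := fun t ht => by simp only [hc]; rw [if_pos ht]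
  have hc2 : ∀ t, 1/2 ≤ t → c t = γ₂ (2 * t - 1) := fun t ht => by
    rcases ht.eq_or_lt with rfl | ht
    · rw [hc1 _ le_rfl]; norm_num [h₁.2.2.2, h₂.2.2.1]
    · simp only [hc]; rw [if_neg (by linarith)]
  obtain ⟨⟨K₁, l₁⟩, m₁, a₁, b₁⟩ := id h₁
  obtain ⟨⟨K₂, l₂⟩, m₂, a₂, b₂⟩ := id h₂
  have hcp : IsRectPath Ω x z c := by
    refine ⟨⟨2 * (K₁ + K₂), ?_⟩, ?_, ?_, ?_⟩
    · have e1 : ∀ s t, 0 ≤ s → s ≤ t → t ≤ 1/2 → dist (c s) (c t) ≤ 2 * (K₁ + K₂) * (t - s) := by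
        intro s t hs hst ht
        rw [hc1 s (by linarith), hc1 t ht]
        have := l₁.dist_le_mul (2*s) ⟨by linarith, by linarith⟩ (2*t) ⟨by linarith, by linarith⟩
        rw [dist_comm (2*s), Real.dist_eq, abs_of_nonneg (by linarith)] at this
        have hK : (0:ℝ) ≤ K₂ := K₂.2
        nlinarith
      have e2 : ∀ s t, 1/2 ≤ s → s ≤ t → t ≤ 1 → dist (c s) (c t) ≤ 2 * (K₁ + K₂) * (t - s) := by
        intro s t hs hst ht
        rw [hc2 s hs, hc2 t (by linarith)]
        have := l₂.dist_le_mul (2*s-1) ⟨by linarith, by linarith⟩ (2*t-1)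
          ⟨by linarith, by linarith⟩
        rw [dist_comm (2*s-1), Real.dist_eq, abs_of_nonneg (by linarith)] at this
        have hK : (0:ℝ) ≤ K₁ := K₁.2
        nlinarith
      have e3 : ∀ s t, 0 ≤ s → s ≤ t → t ≤ 1 → dist (c s) (c t) ≤ 2 * (K₁ + K₂) * (t - s) := by
        intro s t hs hst ht
        rcases le_total t (1/2) with h1 | h1
        · exact e1 s t hs hst h1
        rcases le_total (1/2) s with h2 | h2
        · exact e2 s t h2 hst ht
        have := dist_triangle (c s) (c (1/2)) (c t)
        have := e1 s (1/2) hs h2 le_rfl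
        have := e2 (1/2) t le_rfl h1 ht
        linarith
      apply LipschitzOnWith.of_dist_le_mul
      intro s hs t ht
      push_cast
      rcases le_total s t with hst | hst
      · rw [dist_comm s, Real.dist_eq, abs_of_nonneg (by linarith)]
        exact e3 s t hs.1 hst ht.2
      · rw [dist_comm (c s), Real.dist_eq, abs_of_nonneg (by linarith)]
        exact e3 t s ht.1 hst hs.2
    · intro t ht
      rcases le_total t (1/2) with h1 | h1
      · rw [hc1 t h1]; exact m₁ ⟨by linarith [ht.1], by linarith⟩
      · rw [hc2 t h1]; exact m₂ ⟨by linarith, by linarith [ht.2]⟩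
    · rw [hc1 0 (by norm_num)]; simpa using a₁
    · rw [hc2 1 (by norm_num)]; norm_num; exact b₂
  refine (qhDist_le hcp).trans (le_of_eq ?_)
  have hi := h.integrable hcp
  have hi1 : IntervalIntegrable (fun t => ‖deriv c t‖ / infDist (c t) (frontier Ω)) volume 0 (1/2) :=
    hi.mono_set (by rw [uIcc_of_le (by norm_num), uIcc_of_le (by norm_num)]; apply Icc_subset_Icc <;> norm_num)
  have hi2 : IntervalIntegrable (fun t => ‖deriv c t‖ / infDist (c t) (frontier Ω)) volume (1/2) 1 :=
    hi.mono_set (by rw [uIcc_of_le (by norm_num), uIcc_of_le (by norm_num)]; apply Icc_subset_Icc <;> norm_num)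
  unfold qhLength
  rw [← intervalIntegral.integral_add_adjacent_intervals hi1 hi2]
  congr 1
  · have e := intervalIntegral.mul_integral_comp_mul_left (a := 0) (b := 1/2)
      (f := fun t => ‖deriv γ₁ t‖ / infDist (γ₁ t) (frontier Ω)) (c := 2)
    norm_num at e
    rw [← e, ← intervalIntegral.integral_const_mul]
    apply intervalIntegral.integral_congr_Ioo_of_le (by norm_num)
    intro t ht
    have : c =ᶠ[nhds t] (fun t => γ₁ (2 * t)) := by
      filter_upwards [Iio_mem_nhds ht.2] with s hs
      exact hc1 s (le_of_lt hs)
    simp only [this.deriv_eq, deriv_comp_mul_left, norm_smul, hc1 t ht.2.le]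
    norm_num; ring
  · have e := intervalIntegral.mul_integral_comp_mul_sub (a := 1/2) (b := 1)
      (f := fun t => ‖deriv γ₂ t‖ / infDist (γ₂ t) (frontier Ω)) (c := 2) (d := 1)
    norm_num at e
    norm_num
    rw [← e, ← intervalIntegral.integral_const_mul]
    apply intervalIntegral.integral_congr_Ioo_of_le (by norm_num)
    intro t ht
    have : c =ᶠ[nhds t] (fun t => γ₂ (2 * t - 1)) := by
      filter_upwards [Ioi_mem_nhds ht.1] with s hs
      apply hc2 s; have : 1/2 < s := hs
      linarith
    have e4 : deriv (fun t => γ₂ (2 * t - 1)) t = (2:ℝ) • deriv γ₂ (2 * t - 1) := by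
      have := deriv_comp_mul_left (2:ℝ) (fun s => γ₂ (s - 1)) t
      rw [this, deriv_comp_sub_const]
    have h5 : 1/2 < t := ht.1
    simp only [this.deriv_eq, e4, norm_smul, hc2 t (by linarith)]
    norm_num; ring

lemma QDom.triangle {Ω : Set E} (h : QDom Ω) {x y z : E} (hx : x ∈ Ω) (hy : y ∈ Ω) (hz : z ∈ Ω) :
    qhDist Ω x z ≤ qhDist Ω x y + qhDist Ω y z := by
  apply le_of_forall_pos_le_add
  intro ε hε
  obtain ⟨γ₁, h₁, l₁⟩ := h.exists_path hx hy (show qhDist Ω x y < qhDist Ω x y + ε/2 by linarith)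
  obtain ⟨γ₂, h₂, l₂⟩ := h.exists_path hy hz (show qhDist Ω y z < qhDist Ω y z + ε/2 by linarith)
  have := h.concat h₁ h₂
  linarith

open scoped RealInnerProductSpace in
lemma qh_disp {γ : ℝ → E} {K : NNReal} (hl : LipschitzOnWith K γ (Icc 0 1)) {s t : ℝ}
    (hs : 0 ≤ s) (hst : s ≤ t) (ht : t ≤ 1) :
    ‖γ t - γ s‖ ≤ ∫ u in s..t, ‖deriv γ u‖ := by
  have hsub : Icc s t ⊆ Icc 0 1 := Icc_subset_Icc hs ht
  have hi : IntervalIntegrable (fun u => ‖deriv γ u‖) volume s t :=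
    (qh_integrable_deriv hl).mono_set (by
      rw [uIcc_of_le hst, uIcc_of_le zero_le_one]; exact hsub)
  set w := γ t - γ s with hw
  set f : ℝ → ℝ := fun u => ⟪w, γ u⟫ with hf
  have hfl : LipschitzOnWith (‖w‖₊ * K) f (uIcc s t) := by
    apply LipschitzOnWith.of_dist_le_mul
    intro a ha b hb
    rw [uIcc_of_le hst] at ha hb
    rw [Real.dist_eq, hf, ← inner_sub_right]
    refine (abs_real_inner_le_norm _ _).trans ?_
    have := hl.dist_le_mul a (hsub ha) b (hsub hb)
    rw [dist_eq_norm] at this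
    push_cast
    rw [mul_assoc]
    gcongr
  have hac := hfl.absolutelyContinuousOnInterval
  have h1 := hac.integral_deriv_eq_sub
  have h2 : f t - f s = ‖w‖ * ‖w‖ := by
    rw [hf, ← inner_sub_right, ← hw, real_inner_self_eq_norm_mul_norm]
  have hda : ∀ᵐ u, u ∈ Icc s t → DifferentiableAt ℝ γ u := by
    have := ((hl.mono hsub).locallyBoundedVariationOn).ae_differentiableWithinAt_of_mem
    have n1 : ∀ᵐ u : ℝ, u ≠ s := by simp [ae_iff, measure_singleton]
    have n2 : ∀ᵐ u : ℝ, u ≠ t := by simp [ae_iff, measure_singleton]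
    filter_upwards [this, n1, n2] with u hu a1 a2 hm
    exact (hu hm).differentiableAt
      (Icc_mem_nhds (lt_of_le_of_ne hm.1 a1.symm) (lt_of_le_of_ne hm.2 a2))
  have h3 : ∫ u in s..t, deriv f u ≤ ∫ u in s..t, ‖w‖ * ‖deriv γ u‖ := by
    apply intervalIntegral.integral_mono_ae_restrict hst hac.intervalIntegrable_deriv
      (hi.const_mul _)
    refine (ae_restrict_iff' measurableSet_Icc).2 ?_
    filter_upwards [hda] with u hu hm
    have hd : HasDerivAt f ⟪w, deriv γ u⟫ u := by
      have := (hasDerivAt_const u w).inner ℝ (hu hm).hasDerivAt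
      simpa using this
    rw [hd.deriv]
    exact real_inner_le_norm _ _
  rw [h1, h2, intervalIntegral.integral_const_mul] at h3
  rcases (norm_nonneg w).eq_or_lt with h0 | h0
  · rw [← h0]
    exact intervalIntegral.integral_nonneg hst fun _ _ => norm_nonneg _
  · exact le_of_mul_le_mul_left h3 h0

lemma QDom.step {Ω : Set E} (h : QDom Ω) {x y : E} {γ : ℝ → E}
    (hγ : IsRectPath Ω x y γ) {s t k : ℝ} (hs : 0 ≤ s) (hst : s ≤ t) (ht : t ≤ 1)
    (hk : k < 1)
    (hle : ∫ u in s..t, ‖deriv γ u‖ / infDist (γ u) (frontier Ω) ≤ k) :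
    ‖γ t - γ s‖ ≤ k / (1 - k) * infDist (γ s) (frontier Ω) := by
  have hI := h.integrable hγ
  obtain ⟨⟨K, hl⟩, hm, -⟩ := id hγ
  have hsub : Icc s t ⊆ Icc 0 1 := Icc_subset_Icc hs ht
  have hcont : ContinuousOn (fun u => ‖γ u - γ s‖) (Icc s t) :=
    ((hl.continuousOn.mono hsub).sub continuousOn_const).norm
  obtain ⟨m, hmI, hmax⟩ := isCompact_Icc.exists_isMaxOn (nonempty_Icc.2 hst) hcont
  set D := ‖γ m - γ s‖ with hD
  set d := infDist (γ s) (frontier Ω) with hd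
  have hmax' : ∀ u ∈ Icc s t, ‖γ u - γ s‖ ≤ D := fun u hu => hmax hu
  set g : ℝ → ℝ := fun u => ‖deriv γ u‖ / infDist (γ u) (frontier Ω) with hg
  have hgn : ∀ u, 0 ≤ g u := fun u => div_nonneg (norm_nonneg _) infDist_nonneg
  have hIst : IntervalIntegrable g volume s t := hI.mono_set (by
      rw [uIcc_of_le hst, uIcc_of_le zero_le_one]; exact hsub)
  have hIsm : IntervalIntegrable g volume s m := hI.mono_set (by
      rw [uIcc_of_le hmI.1, uIcc_of_le zero_le_one]
      exact Icc_subset_Icc hs (hmI.2.trans ht))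
  have hIdsm : IntervalIntegrable (fun u => ‖deriv γ u‖) volume s m :=
    (qh_integrable_deriv hl).mono_set (by
      rw [uIcc_of_le hmI.1, uIcc_of_le zero_le_one]
      exact Icc_subset_Icc hs (hmI.2.trans ht))
  have hkm : ∫ u in s..m, g u ≤ k := by
    refine le_trans ?_ hle
    exact intervalIntegral.integral_mono_interval le_rfl hmI.1 hmI.2
      (Filter.Eventually.of_forall hgn) hIst
  have hdpos : 0 < d := h.pos (hm (hsub ⟨le_rfl, hst⟩))
  have hDn : 0 ≤ D := norm_nonneg _
  have key : D ≤ (d + D) * k := by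
    calc D ≤ ∫ u in s..m, ‖deriv γ u‖ := qh_disp hl hs hmI.1 (hmI.2.trans ht)
      _ ≤ ∫ u in s..m, (d + D) * g u := by
        apply intervalIntegral.integral_mono_on hmI.1 hIdsm (hIsm.const_mul _)
        intro u hu
        have hu' : u ∈ Icc s t := ⟨hu.1, hu.2.trans hmI.2⟩
        have hp := h.pos (hm (hsub hu'))
        have h1 : infDist (γ u) (frontier Ω) ≤ d + dist (γ u) (γ s) := infDist_le_infDist_add_dist
        rw [dist_eq_norm] at h1
        have h2 := hmax' u hu'
        have h3 : ‖deriv γ u‖ = infDist (γ u) (frontier Ω) * g u := by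
          simp only [hg]; field_simp
        rw [h3]
        exact mul_le_mul_of_nonneg_right (by linarith) (hgn u)
      _ = (d + D) * ∫ u in s..m, g u := intervalIntegral.integral_const_mul _ _
      _ ≤ (d + D) * k := by gcongr
  refine (hmax' t ⟨hst, le_rfl⟩).trans ?_
  rw [div_mul_eq_mul_div, le_div_iff₀ (by linarith)]
  linarith

lemma QDom.chain {Ω : Set E} (h : QDom Ω) {x y : E} {γ : ℝ → E}
    (hγ : IsRectPath Ω x y γ) {r : ℝ} (hr : qhLength Ω γ < r) {N : ℕ} (hN : r < N) :
    ∃ p : ℕ → E, p 0 = x ∧ p N = y ∧ (∀ i ≤ N, p i ∈ Ω) ∧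
      ∀ i < N, ‖p (i + 1) - p i‖ ≤ (r / N) / (1 - r / N) * infDist (p i) (frontier Ω) := by
  have hI := h.integrable hγ
  have hL0 := qhLength_nonneg Ω γ
  obtain ⟨-, hm, hx, hy⟩ := id hγ
  set g : ℝ → ℝ := fun u => ‖deriv γ u‖ / infDist (γ u) (frontier Ω) with hg
  have hgn : ∀ u, 0 ≤ g u := fun u => div_nonneg (norm_nonneg _) infDist_nonneg
  have hr0 : 0 < r := by linarith
  have hN0 : (0:ℝ) < N := by linarith
  set ε := r - qhLength Ω γ with hε
  have hεp : 0 < ε := by linarith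
  set φ : ℝ → ℝ := fun t => (∫ u in (0:ℝ)..t, g u) + ε * t with hφ
  have hφ0 : φ 0 = 0 := by simp [hφ]
  have hφ1 : φ 1 = r := by
    have : (∫ u in (0:ℝ)..1, g u) = qhLength Ω γ := rfl
    simp only [hφ, this, hε]; ring
  have hint : ∀ a b, 0 ≤ a → a ≤ b → b ≤ 1 → IntervalIntegrable g volume a b := by
    intro a b h0 hab h1
    exact hI.mono_set (by
      rw [uIcc_of_le hab, uIcc_of_le zero_le_one]; exact Icc_subset_Icc h0 h1)
  have hdiff : ∀ a b, 0 ≤ a → a ≤ b → b ≤ 1 → φ b - φ a = (∫ u in a..b, g u) + ε * (b - a) := by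
    intro a b h0 hab h1
    have := intervalIntegral.integral_add_adjacent_intervals (hint 0 a le_rfl h0 (hab.trans h1))
      (hint a b h0 hab h1)
    simp only [hφ]; rw [← this]; ring
  have hgi : ∀ a b, a ≤ b → 0 ≤ ∫ u in a..b, g u := fun a b hab =>
    intervalIntegral.integral_nonneg hab fun u _ => hgn u
  have hcont : ContinuousOn φ (Icc 0 1) := by
    have := intervalIntegral.continuousOn_primitive_interval' hI (a := 0) (by simp)
    rw [uIcc_of_le zero_le_one] at this
    exact this.add (by fun_prop)
  have hIVT := intermediate_value_Icc zero_le_one hcont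
  rw [hφ0, hφ1] at hIVT
  have hex : ∀ i : ℕ, ∃ t, i ≤ N → t ∈ Icc (0:ℝ) 1 ∧ φ t = i * (r / N) := by
    intro i
    by_cases hi : i ≤ N
    · have hi' : (i:ℝ) ≤ N := by exact_mod_cast hi
      obtain ⟨t, ht, e⟩ := hIVT (show (i:ℝ) * (r / N) ∈ Icc 0 r from ⟨by positivity, by
        calc (i:ℝ) * (r / N) ≤ N * (r / N) := by gcongr
          _ = r := by field_simp⟩)
      exact ⟨t, fun _ => ⟨ht, e⟩⟩
    · exact ⟨0, fun hh => absurd hh hi⟩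
  choose τ hτ using hex
  have hmono : ∀ a b, a ∈ Icc (0:ℝ) 1 → b ∈ Icc (0:ℝ) 1 → φ a ≤ φ b → a ≤ b := by
    intro a b ha hb hab
    by_contra! hlt
    have h1 := hdiff b a hb.1 hlt.le ha.2
    have h2 := hgi b a hlt.le
    have := mul_pos hεp (sub_pos.2 hlt)
    linarith
  refine ⟨fun i => γ (τ i), ?_, ?_, fun i hi => hm (hτ i hi).1, ?_⟩
  · obtain ⟨h1, h2⟩ := hτ 0 (Nat.zero_le _)
    have : τ 0 = 0 := le_antisymm (hmono _ _ h1 (by simp) (by rw [h2, hφ0]; simp)) h1.1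
    simp only [this, hx]
  · obtain ⟨h1, h2⟩ := hτ N le_rfl
    have : τ N = 1 := le_antisymm h1.2 (hmono _ _ (by simp) h1 (by
      rw [h2, hφ1]; field_simp; exact le_rfl))
    simp only [this, hy]
  · intro i hi
    obtain ⟨h1, h2⟩ := hτ i hi.le
    obtain ⟨h3, h4⟩ := hτ (i+1) hi
    push_cast at h4
    have hrN : 0 < r / N := by positivity
    have hle : τ i ≤ τ (i+1) := hmono _ _ h1 h3 (by rw [h2, h4]; linarith)
    apply h.step hγ h1.1 hle h3.2
    · rw [div_lt_one hN0]; exact hN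
    · have := hdiff _ _ h1.1 hle h3.2
      rw [h2, h4] at this
      have := mul_nonneg hεp.le (sub_nonneg.2 hle)
      linarith

lemma QDom.chain_bound {Ω : Set E} (h : QDom Ω) {p : ℕ → E} {N : ℕ} {k : ℝ} (hk : k < 1)
    (hp : ∀ i ≤ N, p i ∈ Ω)
    (hs : ∀ i < N, ‖p (i + 1) - p i‖ ≤ k * infDist (p i) (frontier Ω)) :
    ∀ i ≤ N, qhDist Ω (p 0) (p i) ≤ i * (k / (1 - k)) := by
  intro i
  induction i with
  | zero =>
    intro _
    have := h.seg_bound (hp 0 (Nat.zero_le _)) (hp 0 (Nat.zero_le _)) (k := 0) one_pos (by simp)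
    simpa using this
  | succ i ih =>
    intro hi
    have h1 := ih (by omega)
    have h2 := h.seg_bound (hp i (by omega)) (hp (i+1) hi) hk (hs i (by omega))
    have h3 := h.triangle (hp 0 (Nat.zero_le _)) (hp i (by omega)) (hp (i+1) hi)
    push_cast
    linarith

lemma QDom.chain_far {Ω : Set E} {p : ℕ → E} {N : ℕ} {k : ℝ} (hk : 0 ≤ k)
    (hs : ∀ i < N, ‖p (i + 1) - p i‖ ≤ k * infDist (p i) (frontier Ω)) :
    ∀ i ≤ N, ‖p i - p 0‖ + infDist (p 0) (frontier Ω) ≤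
      (1 + k) ^ i * infDist (p 0) (frontier Ω) := by
  intro i
  induction i with
  | zero => intro _; simp
  | succ i ih =>
    intro hi
    have h1 := ih (by omega)
    have h2 := hs i (by omega)
    have h3 : infDist (p i) (frontier Ω) ≤ infDist (p 0) (frontier Ω) + dist (p i) (p 0) :=
      infDist_le_infDist_add_dist
    rw [dist_eq_norm] at h3
    have h4 : ‖p (i+1) - p 0‖ ≤ ‖p (i+1) - p i‖ + ‖p i - p 0‖ := norm_sub_le_norm_sub_add_norm_sub _ _ _
    have h5 := mul_le_mul_of_nonneg_left (h3.trans (by linarith)) hk (c := (1 + k) ^ i * infDist (p 0) (frontier Ω))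
    rw [pow_succ]
    nlinarith

lemma QDom.ball_convex {Ω : Set E} (h : QDom Ω) {x : E} (hx : x ∈ Ω) {r : ℝ} (hr : 0 < r) :
    Convex ℝ (qhBall Ω x r) := by
  rintro y ⟨hy, hyr⟩ z ⟨hz, hzr⟩ a b ha hb hab
  refine ⟨h.conv hy hz ha hb hab, ?_⟩
  obtain ⟨γ₁, g₁, l₁⟩ := h.exists_path hx hy hyr
  obtain ⟨γ₂, g₂, l₂⟩ := h.exists_path hx hz hzr
  obtain ⟨ρ, hρ1, hρ2⟩ := exists_between (max_lt l₁ l₂)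
  have m1 := (le_max_left _ _).trans_lt hρ1
  have m2 := (le_max_right _ _).trans_lt hρ1
  have hρ0 : 0 < ρ := (qhLength_nonneg Ω γ₁).trans_lt m1
  -- choose `N` with `ρ < r * (1 - 2ρ/N)` and `2ρ < N`
  obtain ⟨N, hN⟩ := exists_nat_gt (2 * ρ + 2 * ρ * r / (r - ρ))
  have hrρ : 0 < r - ρ := by linarith
  have hq : 0 < 2 * ρ * r / (r - ρ) := by positivity
  have hN1 : 2 * ρ < N := by linarith
  have hN2 : 2 * ρ * r < N * (r - ρ) := by
    rw [← div_lt_iff₀ hrρ]; linarith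
  have hN0 : (0:ℝ) < N := by linarith
  obtain ⟨p, p0, pN, pm, ps⟩ := h.chain g₁ m1 (N := N) (by linarith)
  obtain ⟨q, q0, qN, qm, qs⟩ := h.chain g₂ m2 (N := N) (by linarith)
  set k := (ρ / N) / (1 - ρ / N) with hk
  have hkk : k = ρ / (N - ρ) := by rw [hk]; field_simp
  have hk1 : k < 1 := by rw [hkk, div_lt_one (by linarith)]; linarith
  have hk0 : 0 ≤ k := by rw [hkk]; apply div_nonneg <;> linarith
  have := h.chain_bound (p := fun i => a • p i + b • q i) (N := N) hk1
    (fun i hi => h.conv (pm i hi) (qm i hi) ha hb hab) (fun i hi => by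
      have e : a • p (i+1) + b • q (i+1) - (a • p i + b • q i) =
        a • (p (i+1) - p i) + b • (q (i+1) - q i) := by module
      rw [e]
      have n1 := norm_add_le (a • (p (i+1) - p i)) (b • (q (i+1) - q i))
      rw [norm_smul, norm_smul, Real.norm_of_nonneg ha, Real.norm_of_nonneg hb] at n1
      have n2 := mul_le_mul_of_nonneg_left (ps i hi) ha
      have n3 := mul_le_mul_of_nonneg_left (qs i hi) hb
      have n4 := mul_le_mul_of_nonneg_left (h.concave (pm i hi.le) (qm i hi.le) ha hb hab) hk0
      nlinarith) N le_rfl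
  simp only [p0, q0, pN, qN] at this
  rw [← add_smul, hab, one_smul] at this
  refine this.trans_lt ?_
  have hk2 : k / (1 - k) = ρ / (N - 2 * ρ) := by
    have : (N:ℝ) - ρ ≠ 0 := by linarith
    have : (N:ℝ) - 2 * ρ ≠ 0 := by linarith
    have h1 : 1 - k = (N - 2 * ρ) / (N - ρ) := by rw [hkk]; field_simp; ring
    rw [h1, hkk]; field_simp
  rw [hk2, ← mul_div_assoc, div_lt_iff₀ (by linarith)]
  linarith

lemma QDom.ball_bounded {Ω : Set E} (h : QDom Ω) {x : E} (hx : x ∈ Ω) {r : ℝ} (hr : 0 < r) :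
    Bornology.IsBounded (qhBall Ω x r) := by
  obtain ⟨N, hN⟩ := exists_nat_gt r
  rw [isBounded_iff_subset_closedBall x]
  refine ⟨(1 + (r / N) / (1 - r / N)) ^ N * infDist x (frontier Ω), ?_⟩
  rintro y ⟨hy, hyr⟩
  obtain ⟨γ, g, l⟩ := h.exists_path hx hy hyr
  obtain ⟨p, p0, pN, pm, ps⟩ := h.chain g l hN
  have hN0 : (0:ℝ) < N := by linarith
  have hlt : r / N < 1 := by rwa [div_lt_one hN0]
  have := QDom.chain_far (div_nonneg (by positivity) (by linarith)) ps N le_rfl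
  rw [p0, pN] at this
  rw [mem_closedBall, dist_eq_norm]
  have := h.pos hx
  linarith

lemma QDom.ball_open {Ω : Set E} (h : QDom Ω) {x : E} (hx : x ∈ Ω) {r : ℝ} :
    IsOpen (qhBall Ω x r) := by
  rw [Metric.isOpen_iff]
  rintro y ⟨hy, hyr⟩
  set e := r - qhDist Ω x y with he
  have hep : 0 < e := by linarith
  have hd := h.pos hy
  set d := infDist y (frontier Ω) with hd'
  set k := e / (2 + 2 * e) with hk
  have hk0 : 0 < k := by positivity
  have hk1 : k < 1 := by rw [hk, div_lt_one (by positivity)]; linarith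
  refine ⟨k * d, by positivity, fun z hz => ?_⟩
  rw [mem_ball, dist_eq_norm] at hz
  have hzΩ : z ∈ Ω := h.ball_sub hy (by
    rw [mem_ball, dist_eq_norm]; nlinarith)
  refine ⟨hzΩ, ?_⟩
  have h1 := h.seg_bound hy hzΩ hk1 hz.le
  have h2 := h.triangle hx hy hzΩ
  have h3 : k / (1 - k) < e := by
    rw [div_lt_iff₀ (by linarith), hk]
    field_simp
    nlinarith
  linarith

lemma strictlyConvexSet_of {G : Set E} (hc : Convex ℝ G) (ho : IsOpen G)
    (hb : Bornology.IsBounded G) : StrictlyConvexSet G := by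
  intro y hy
  refine ⟨hc.starConvex hy, fun v hv => ?_⟩
  set s : Set E := (Homeomorph.addLeft y) ⁻¹' G with hs
  have hsc : Convex ℝ s := hc.translate_preimage_right y
  have hs0 : s ∈ nhds (0:E) :=
    (ho.preimage (Homeomorph.addLeft y).continuous).mem_nhds (by simpa [hs] using hy)
  have hsb : Bornology.IsBounded s := by
    obtain ⟨R, hR⟩ := hb.subset_closedBall y
    refine (isBounded_closedBall (x := (0:E)) (r := R)).subset fun z hz => ?_
    have := hR hz
    simpa [mem_closedBall, dist_eq_norm] using this
  have hg : 0 < gauge s v :=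
    (gauge_pos (absorbent_nhds_zero hs0) (NormedSpace.isVonNBounded_of_isBounded ℝ hsb)).2 hv
  have key : ∀ t : ℝ, 0 < t → (y + t • v ∈ frontier G ↔ t * gauge s v = 1) := by
    intro t ht
    have h1 : t * gauge s v = gauge s (t • v) := by
      rw [gauge_smul_of_nonneg ht.le, smul_eq_mul]
    rw [h1, gauge_eq_one_iff_mem_frontier hsc hs0, hs, ← Homeomorph.preimage_frontier]
    rfl
  refine ⟨y + (gauge s v)⁻¹ • v, ⟨(key _ (inv_pos.2 hg)).2 (inv_mul_cancel₀ hg.ne'), _,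
    inv_pos.2 hg, rfl⟩, ?_⟩
  rintro q ⟨hq, t, ht, rfl⟩
  have := (key t ht).1 hq
  rw [eq_inv_of_mul_eq_one_left this]

end QH

/-- in a convex proper subdomain of `ℝⁿ`, all quasihyperbolic balls are
strictly convex. -/
theorem qh_ball_strictly_convex_of_convex_domain (n : ℕ) (hn : 2 ≤ n)
    (Ω : Set (EuclideanSpace ℝ (Fin n)))
    (hopen : IsOpen Ω) (hne : Ω.Nonempty) (hconv : Convex ℝ Ω) (hproper : Ω ≠ univ)
    (x : EuclideanSpace ℝ (Fin n)) (hx : x ∈ Ω) (r : ℝ) (hr : 0 < r) :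
    StrictlyConvexSet (qhBall Ω x r) := by
  have h : QDom Ω := ⟨hopen, hconv, nonempty_frontier_iff.2 ⟨hne, hproper⟩⟩
  exact strictlyConvexSet_of (h.ball_convex hx hr) (h.ball_open hx) (h.ball_bounded hx hr)
end

section
/- Let Ω ⊊ ℝⁿ (n ≥ 2) be a convex proper subdomain and x, y ∈ Ω. Then the quasihyperbolic geodesic from x to y is unique: if γ₁ and γ₂ are rectifiable arcs in Ω from x to y with ℓ_k(γ₁) = ℓ_k(γ₂) = k_Ω(x,y), then γ₁ and γ₂ have the same image. -/
open Set Metric MeasureTheory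

section helpers

open Topology Filter

set_option linter.unusedSectionVars false

variable {F : Type*} [NormedAddCommGroup F] [InnerProductSpace ℝ F] [FiniteDimensional ℝ F]

lemma aux_ball_subset {Ω : Set F} (hopen : IsOpen Ω) {z : F} (hz : z ∈ Ω) :
    ball z (infDist z (frontier Ω)) ⊆ Ω := by
  intro p hp
  have hpos : 0 < infDist z (frontier Ω) := lt_of_le_of_lt dist_nonneg hp
  have hd : Disjoint (ball z (infDist z (frontier Ω))) (frontier Ω) := disjoint_ball_infDist
  have hpre : IsPreconnected (ball z (infDist z (frontier Ω))) :=
    (convex_ball z _).isPreconnected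
  refine hpre.subset_left_of_subset_union hopen (isClosed_closure (s := Ω)).isOpen_compl ?_ ?_
    ⟨z, mem_ball_self hpos, hz⟩ hp
  · exact Set.disjoint_compl_right_iff_subset.2 subset_closure
  · intro q hq
    by_cases hqc : q ∈ closure Ω
    · left
      by_contra hqn
      exact Set.disjoint_left.1 hd hq ⟨hqc, by rwa [hopen.interior_eq]⟩
    · exact Or.inr hqc

lemma aux_pos_s14 {Ω : Set F} (hopen : IsOpen Ω) (hproper : Ω ≠ univ) {z : F} (hz : z ∈ Ω) :
    0 < infDist z (frontier Ω) := by
  have hne : (frontier Ω).Nonempty := nonempty_frontier_iff.2 ⟨⟨z, hz⟩, hproper⟩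
  refine (isClosed_frontier.notMem_iff_infDist_pos hne).1 ?_
  rw [hopen.frontier_eq]
  exact fun h => h.2 hz

lemma aux_concave_s14 {Ω : Set F} (hopen : IsOpen Ω) (hconv : Convex ℝ Ω) (hproper : Ω ≠ univ)
    {z w : F} (hz : z ∈ Ω) (hw : w ∈ Ω) :
    (infDist z (frontier Ω) + infDist w (frontier Ω)) / 2 ≤
      infDist ((1/2 : ℝ) • (z + w)) (frontier Ω) := by
  have hne : (frontier Ω).Nonempty := nonempty_frontier_iff.2 ⟨⟨z, hz⟩, hproper⟩
  have hz0 := aux_pos_s14 hopen hproper hz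
  have hw0 := aux_pos_s14 hopen hproper hw
  set a := infDist z (frontier Ω) with ha
  set b := infDist w (frontier Ω) with hb
  rw [le_infDist hne]
  intro p hp
  by_contra hlt
  push Not at hlt
  set q := p - (1/2 : ℝ) • (z + w) with hq
  have hqn : ‖q‖ < (a + b) / 2 := by
    rw [hq, ← dist_eq_norm, dist_comm]; exact hlt
  have key : ∀ c : ℝ, 0 < c → ‖(2 * c / (a + b)) • q‖ < c := by
    intro c hc
    rw [norm_smul, Real.norm_of_nonneg (by positivity), div_mul_eq_mul_div,
      div_lt_iff₀ (by positivity)]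
    nlinarith
  have h1 : z + (2 * a / (a + b)) • q ∈ Ω := aux_ball_subset hopen hz (by
    rw [mem_ball, dist_eq_norm, add_sub_cancel_left]; exact key a hz0)
  have h2 : w + (2 * b / (a + b)) • q ∈ Ω := aux_ball_subset hopen hw (by
    rw [mem_ball, dist_eq_norm, add_sub_cancel_left]; exact key b hw0)
  have h3 := hconv h1 h2 (a := 1/2) (b := 1/2) (by norm_num) (by norm_num) (by norm_num)
  have h4 : (1/2 : ℝ) • (z + (2 * a / (a + b)) • q) + (1/2 : ℝ) • (w + (2 * b / (a + b)) • q)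
      = p := by
    have : p = (1/2 : ℝ) • (z + w) + ((a + b) / (a + b)) • q := by
      rw [div_self (by positivity), one_smul, hq]; abel
    rw [this]
    module
  rw [h4] at h3
  rw [hopen.frontier_eq] at hp
  exact hp.2 h3

lemma aux_ae {f : ℝ → F} {K : NNReal} (hf : LipschitzOnWith K f (Icc 0 1)) :
    ∀ᵐ t, t ∈ Ioc (0:ℝ) 1 → (t ∈ Ioo (0:ℝ) 1 ∧ DifferentiableAt ℝ f t) := by
  have h1 : ∀ᵐ t : ℝ, t ≠ 1 := by simp [ae_iff, measure_singleton]
  filter_upwards [hf.ae_differentiableWithinAt_of_mem_real, h1] with t ht ht1 hm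
  have hI : t ∈ Ioo (0:ℝ) 1 := ⟨hm.1, lt_of_le_of_ne hm.2 ht1⟩
  exact ⟨hI, (ht (Ioo_subset_Icc_self hI)).differentiableAt (Icc_mem_nhds hI.1 hI.2)⟩

lemma aux_deriv_bound {f : ℝ → F} {K : NNReal} (hf : LipschitzOnWith K f (Icc 0 1))
    {t : ℝ} (ht : t ∈ Ioo (0:ℝ) 1) : ‖deriv f t‖ ≤ K :=
  norm_deriv_le_of_lipschitzOn (Icc_mem_nhds ht.1 ht.2) hf

lemma aux_int {f : ℝ → F} {K : NNReal} (hf : LipschitzOnWith K f (Icc 0 1)) {g : ℝ → ℝ}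
    (hg : ContinuousOn g (Icc 0 1)) {a b : ℝ} (ha : 0 ≤ a) (hab : a ≤ b) (hb : b ≤ 1) :
    IntervalIntegrable (fun t => ‖deriv f t‖ * g t) volume a b := by
  have hsub : uIcc a b ⊆ Icc 0 1 := by rw [uIcc_of_le hab]; exact Icc_subset_Icc ha hb
  refine IntervalIntegrable.mul_continuousOn ?_ (hg.mono hsub)
  rw [intervalIntegrable_iff_integrableOn_Ioc_of_le hab]
  refine Integrable.mono' (g := fun _ => (K:ℝ)) (integrable_const _)
    (aestronglyMeasurable_deriv f _).norm ?_
  rw [ae_restrict_iff' measurableSet_Ioc]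
  filter_upwards [aux_ae hf] with t ht htm
  rw [norm_norm]
  exact aux_deriv_bound hf (ht ⟨lt_of_le_of_lt ha htm.1, htm.2.trans hb⟩).1

lemma aux_ftc {f : ℝ → F} {K : NNReal} (hf : LipschitzOnWith K f (Icc 0 1))
    {a b : ℝ} (ha : 0 ≤ a) (hab : a ≤ b) (hb : b ≤ 1) :
    ‖f b - f a‖ ≤ ∫ t in a..b, ‖deriv f t‖ := by
  have hsub : uIcc a b ⊆ Icc 0 1 := by rw [uIcc_of_le hab]; exact Icc_subset_Icc ha hb
  set v := f b - f a with hv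
  by_cases hv0 : ‖v‖ = 0
  · rw [hv0]; exact intervalIntegral.integral_nonneg hab fun _ _ => norm_nonneg _
  have hvpos : 0 < ‖v‖ := lt_of_le_of_ne (norm_nonneg _) (Ne.symm hv0)
  set g : ℝ → ℝ := fun t => innerSL ℝ v (f t) with hg
  have hlip : LipschitzOnWith (‖innerSL ℝ v‖₊ * K) g (uIcc a b) :=
    ((innerSL ℝ v).lipschitz.lipschitzOnWith (s := univ)).comp (hf.mono hsub) (mapsTo_univ _ _)
  have hac : AbsolutelyContinuousOnInterval g a b := hlip.absolutelyContinuousOnInterval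
  have h1 := hac.integral_deriv_eq_sub
  have h2 : g b - g a = ‖v‖ * ‖v‖ := by
    simp only [hg]
    rw [← map_sub, ← hv, innerSL_apply_apply, real_inner_self_eq_norm_mul_norm]
  have hi : IntervalIntegrable (fun t => ‖deriv f t‖) volume a b := by
    simpa using aux_int hf (g := fun _ => 1) continuousOn_const ha hab hb
  have h3 : ∫ t in a..b, deriv g t ≤ ∫ t in a..b, ‖v‖ * ‖deriv f t‖ := by
    refine intervalIntegral.integral_mono_ae_restrict hab hac.intervalIntegrable_deriv
      (hi.const_mul _) ?_
    rw [← restrict_Ioc_eq_restrict_Icc, EventuallyLE, ae_restrict_iff' measurableSet_Ioc]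
    filter_upwards [aux_ae hf] with t ht htm
    have hd := (ht ⟨lt_of_le_of_lt ha htm.1, htm.2.trans hb⟩).2.hasDerivAt
    have hd2 : HasDerivAt g (innerSL ℝ v (deriv f t)) t :=
      (innerSL ℝ v).hasFDerivAt.comp_hasDerivAt t hd
    rw [hd2.deriv, innerSL_apply_apply]
    exact real_inner_le_norm _ _
  rw [h1, h2, intervalIntegral.integral_const_mul] at h3
  exact le_of_mul_le_mul_left h3 hvpos

lemma aux_reparam {Ω : Set F} (hopen : IsOpen Ω) (hproper : Ω ≠ univ) {x y : F} {γ : ℝ → F}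
    (h : IsRectPath Ω x y γ) :
    ∃ σ : ℝ → F, IsRectPath Ω x y σ ∧ σ '' Icc 0 1 = γ '' Icc 0 1 ∧
      ∀ t ∈ Ioo (0:ℝ) 1, ‖deriv σ t‖ ≤ qhLength Ω γ * infDist (σ t) (frontier Ω) := by
  obtain ⟨⟨K, hK⟩, hmaps, hγ0, hγ1⟩ := h
  set d : ℝ → ℝ := fun t => infDist (γ t) (frontier Ω) with hd
  have hdpos : ∀ t ∈ Icc (0:ℝ) 1, 0 < d t := fun t ht => aux_pos_s14 hopen hproper (hmaps ht)
  have hdc : ContinuousOn d (Icc 0 1) :=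
    (continuous_infDist_pt _).comp_continuousOn hK.continuousOn
  have hdi : ContinuousOn (fun t => (d t)⁻¹) (Icc 0 1) := hdc.inv₀ fun t ht => (hdpos t ht).ne'
  obtain ⟨M, hM⟩ := isCompact_Icc.exists_bound_of_continuousOn hdc
  have hM' : ∀ t ∈ Icc (0:ℝ) 1, d t ≤ M := fun t ht => (le_abs_self _).trans (hM t ht)
  have hM0 : 0 ≤ M := (norm_nonneg _).trans (hM 0 (by simp))
  set ρ : ℝ → ℝ := fun t => ‖deriv γ t‖ / d t with hρ
  have hρi : ∀ a b : ℝ, 0 ≤ a → a ≤ b → b ≤ 1 → IntervalIntegrable ρ volume a b := by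
    intro a b ha hab hb
    simpa [hρ, div_eq_mul_inv] using aux_int hK hdi ha hab hb
  set S : ℝ → ℝ := fun t => ∫ u in (0:ℝ)..t, ρ u with hS
  have hSsub : ∀ a b : ℝ, 0 ≤ a → a ≤ b → b ≤ 1 → S b - S a = ∫ u in a..b, ρ u := by
    intro a b ha hab hb
    simp only [hS]
    exact intervalIntegral.integral_interval_sub_left (hρi 0 b le_rfl (ha.trans hab) hb)
      (hρi 0 a le_rfl ha (hab.trans hb))
  have hSmono : ∀ a b : ℝ, 0 ≤ a → a ≤ b → b ≤ 1 → S a ≤ S b := by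
    intro a b ha hab hb
    rw [← sub_nonneg, hSsub a b ha hab hb]
    exact intervalIntegral.integral_nonneg hab fun u hu =>
      div_nonneg (norm_nonneg _) infDist_nonneg
  have hSc : ContinuousOn S (Icc 0 1) := by
    have := intervalIntegral.continuousOn_primitive_interval'
      (hρi 0 1 le_rfl zero_le_one le_rfl) (a := 0) (by simp)
    rwa [uIcc_of_le zero_le_one] at this
  have hS0 : S 0 = 0 := by simp [hS]
  have hS1 : S 1 = qhLength Ω γ := rfl
  set L := qhLength Ω γ with hL
  -- basic estimate
  have key : ∀ a b C : ℝ, 0 ≤ a → a ≤ b → b ≤ 1 → (∀ t ∈ Icc a b, d t ≤ C) →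
      ‖γ b - γ a‖ ≤ C * (S b - S a) := by
    intro a b C ha hab hb hC
    refine (aux_ftc hK ha hab hb).trans ?_
    rw [hSsub a b ha hab hb, ← intervalIntegral.integral_const_mul]
    refine intervalIntegral.integral_mono_on hab ?_ ((hρi a b ha hab hb).const_mul C) ?_
    · simpa using aux_int hK (g := fun _ => 1) continuousOn_const ha hab hb
    · intro t ht
      have hp := hdpos t ⟨ha.trans ht.1, ht.2.trans hb⟩
      calc ‖deriv γ t‖ = d t * (‖deriv γ t‖ / d t) := by field_simp
        _ ≤ C * (‖deriv γ t‖ / d t) :=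
          mul_le_mul_of_nonneg_right (hC t ht) (div_nonneg (norm_nonneg _) hp.le)
  have P1 : ∀ a b : ℝ, 0 ≤ a → a ≤ b → b ≤ 1 → ‖γ b - γ a‖ ≤ M * (S b - S a) :=
    fun a b ha hab hb => key a b M ha hab hb
      fun t ht => hM' t ⟨ha.trans ht.1, ht.2.trans hb⟩
  have P1' : ∀ a ∈ Icc (0:ℝ) 1, ∀ b ∈ Icc (0:ℝ) 1, ‖γ b - γ a‖ ≤ M * |S b - S a| := by
    intro a ha b hb
    rcases le_total a b with hab | hab
    · exact (P1 a b ha.1 hab hb.2).trans (mul_le_mul_of_nonneg_left (le_abs_self _) hM0)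
    · rw [norm_sub_rev, abs_sub_comm]
      exact (P1 b a hb.1 hab ha.2).trans (mul_le_mul_of_nonneg_left (le_abs_self _) hM0)
  have hdl : ∀ s t : ℝ, d t ≤ d s + ‖γ t - γ s‖ := by
    intro s t
    rw [← dist_eq_norm]
    exact infDist_le_infDist_add_dist
  have P2 : ∀ a ∈ Icc (0:ℝ) 1, ∀ b ∈ Icc (0:ℝ) 1,
      ‖γ b - γ a‖ ≤ (d a + M * |S b - S a|) * |S b - S a| := by
    intro a ha b hb
    rcases le_total a b with hab | hab
    · rw [abs_of_nonneg (sub_nonneg.2 (hSmono a b ha.1 hab hb.2))]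
      refine key a b _ ha.1 hab hb.2 fun t ht => (hdl a t).trans ?_
      have h1 := P1 a t ha.1 ht.1 (ht.2.trans hb.2)
      have h2 := hSmono t b (ha.1.trans ht.1) ht.2 hb.2
      have h3 : M * (S t - S a) ≤ M * (S b - S a) :=
        mul_le_mul_of_nonneg_left (by linarith) hM0
      linarith
    · rw [abs_sub_comm, norm_sub_rev, abs_of_nonneg (sub_nonneg.2 (hSmono b a hb.1 hab ha.2))]
      refine key b a _ hb.1 hab ha.2 fun t ht => (hdl a t).trans ?_
      have h1 := P1 t a (hb.1.trans ht.1) ht.2 ha.2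
      have h2 := hSmono b t hb.1 ht.1 (ht.2.trans ha.2)
      have h3 : M * (S a - S t) ≤ M * (S a - S b) :=
        mul_le_mul_of_nonneg_left (by linarith) hM0
      rw [norm_sub_rev] at h1
      linarith
  have hL0 : 0 ≤ L := by rw [← hS1, ← hS0]; exact hSmono 0 1 le_rfl zero_le_one le_rfl
  have hex : ∀ u : ℝ, ∃ t : ℝ, u ∈ Icc (0:ℝ) 1 → t ∈ Icc (0:ℝ) 1 ∧ S t = L * u := by
    intro u
    by_cases hu : u ∈ Icc (0:ℝ) 1
    · have hmem : L * u ∈ Icc (S 0) (S 1) := by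
        rw [hS0, hS1]
        exact ⟨mul_nonneg hL0 hu.1, mul_le_of_le_one_right hL0 hu.2⟩
      obtain ⟨t, ht, hte⟩ := intermediate_value_Icc zero_le_one hSc hmem
      exact ⟨t, fun _ => ⟨ht, hte⟩⟩
    · exact ⟨0, fun h => absurd h hu⟩
  choose τ hτ using hex
  have huniq : ∀ a ∈ Icc (0:ℝ) 1, ∀ b ∈ Icc (0:ℝ) 1, S b = S a → γ b = γ a := by
    intro a ha b hb hab
    have := P1' a ha b hb
    rw [hab, sub_self, abs_zero, mul_zero] at this
    exact sub_eq_zero.1 (norm_le_zero_iff.1 this)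
  have hz : (0:ℝ) ∈ Icc (0:ℝ) 1 := by simp
  have ho : (1:ℝ) ∈ Icc (0:ℝ) 1 := by simp
  refine ⟨fun u => γ (τ u), ⟨⟨⟨M * L, mul_nonneg hM0 hL0⟩, ?_⟩, ?_, ?_, ?_⟩, ?_, ?_⟩
  · refine LipschitzOnWith.of_dist_le_mul fun u hu v hv => ?_
    rw [dist_eq_norm, Real.dist_eq]
    refine (P1' _ (hτ v hv).1 _ (hτ u hu).1).trans (le_of_eq ?_)
    rw [(hτ v hv).2, (hτ u hu).2, ← mul_sub, abs_mul, abs_of_nonneg hL0, ← mul_assoc]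
    rfl
  · exact fun u hu => hmaps (hτ u hu).1
  · refine (huniq 0 hz _ (hτ 0 hz).1 ?_).trans hγ0
    rw [(hτ 0 hz).2, hS0, mul_zero]
  · refine (huniq 1 ho _ (hτ 1 ho).1 ?_).trans hγ1
    rw [(hτ 1 ho).2, hS1, mul_one]
  · apply Subset.antisymm
    · rintro _ ⟨u, hu, rfl⟩
      exact ⟨τ u, (hτ u hu).1, rfl⟩
    · rintro _ ⟨t, ht, rfl⟩
      have hmem : S t ∈ Icc (L * 0) (L * 1) := by
        rw [mul_zero, mul_one, ← hS0, ← hS1]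
        exact ⟨hSmono 0 t le_rfl ht.1 ht.2, hSmono t 1 ht.1 ht.2 le_rfl⟩
      obtain ⟨u, hu, hue⟩ := intermediate_value_Icc (f := fun u : ℝ => L * u) zero_le_one
        (by fun_prop) hmem
      exact ⟨u, hu, huniq t ht _ (hτ u hu).1 ((hτ u hu).2.trans hue)⟩
  · intro u hu
    have huI := Ioo_subset_Icc_self hu
    change _ ≤ L * d (τ u)
    have hd0 : 0 ≤ d (τ u) := infDist_nonneg
    refine le_of_forall_pos_le_add fun ε hε => ?_
    refine norm_deriv_le_of_lip' (by positivity) ?_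
    have hlim : Tendsto (fun v : ℝ => (d (τ u) + M * (L * |v - u|)) * L) (𝓝 u)
        (𝓝 ((d (τ u) + M * (L * |u - u|)) * L)) := by
      apply Continuous.tendsto
      fun_prop
    have hlt : (d (τ u) + M * (L * |u - u|)) * L < L * d (τ u) + ε := by
      rw [sub_self, abs_zero]; linarith [mul_comm L (d (τ u))]
    filter_upwards [hlim.eventually_lt_const hlt, Icc_mem_nhds hu.1 hu.2] with v hv hvI
    have h1 := P2 _ (hτ u huI).1 _ (hτ v hvI).1
    rw [(hτ v hvI).2, (hτ u huI).2, ← mul_sub, abs_mul, abs_of_nonneg hL0, ← mul_assoc] at h1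
    rw [Real.norm_eq_abs]
    refine h1.trans (mul_le_mul_of_nonneg_right ?_ (abs_nonneg _))
    rw [← mul_assoc] at hv
    linarith

lemma aux_gronwall {f : ℝ → F} {K : NNReal} (hf : LipschitzOnWith K f (Icc 0 1)) (h0 : f 0 = 0)
    {L : ℝ} (h : ∀ᵐ t, t ∈ Ioc (0:ℝ) 1 → ‖deriv f t‖ ≤ L * ‖f t‖) :
    ∀ t ∈ Icc (0:ℝ) 1, f t = 0 := by
  have hc : ContinuousOn (fun t => ‖f t‖) (Icc 0 1) := hf.continuousOn.norm
  have hii : ∀ t ∈ Icc (0:ℝ) 1, IntervalIntegrable (fun t => ‖f t‖) volume 0 t := by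
    intro t ht
    refine (hc.mono ?_).intervalIntegrable
    rw [uIcc_of_le ht.1]; exact Icc_subset_Icc_right ht.2
  have hle : ∀ t ∈ Icc (0:ℝ) 1, ‖f t‖ ≤ L * ∫ u in (0:ℝ)..t, ‖f u‖ := by
    intro t ht
    have h1 := aux_ftc hf le_rfl ht.1 ht.2
    rw [h0, sub_zero] at h1
    refine h1.trans ?_
    rw [← intervalIntegral.integral_const_mul]
    refine intervalIntegral.integral_mono_ae_restrict ht.1 ?_ ((hii t ht).const_mul _) ?_
    · simpa using aux_int hf (g := fun _ => 1) continuousOn_const le_rfl ht.1 ht.2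
    · rw [← restrict_Ioc_eq_restrict_Icc, EventuallyLE, ae_restrict_iff' measurableSet_Ioc]
      filter_upwards [h] with u hu hum
      exact hu ⟨hum.1, hum.2.trans ht.2⟩
  have hpos : ∀ t ∈ Icc (0:ℝ) 1, 0 ≤ ∫ u in (0:ℝ)..t, ‖f u‖ := fun t ht =>
    intervalIntegral.integral_nonneg ht.1 fun _ _ => norm_nonneg _
  have hg := norm_le_gronwallBound_of_norm_deriv_right_le (f := fun t => ∫ u in (0:ℝ)..t, ‖f u‖)
    (f' := fun t => ‖f t‖) (δ := 0) (K := L) (ε := 0) (a := 0) (b := 1) ?_ ?_ (by simp) ?_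
  · intro t ht
    have h1 := hg t ht
    rw [gronwallBound_ε0_δ0] at h1
    have h2 := norm_le_zero_iff.1 h1
    have h3 := hle t ht
    rw [h2, mul_zero] at h3
    exact norm_le_zero_iff.1 h3
  · have := intervalIntegral.continuousOn_primitive_interval' (hii 1 (by simp)) (a := 0) (by simp)
    rwa [uIcc_of_le zero_le_one] at this
  · intro t ht
    have htI := Ico_subset_Icc_self ht
    have hnb : Icc (0:ℝ) 1 ∈ 𝓝[>] t :=
      mem_of_superset (Ioo_mem_nhdsGT ht.2) fun s hs => ⟨ht.1.trans hs.1.le, hs.2.le⟩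
    have hcw : ContinuousWithinAt (fun t => ‖f t‖) (Ioi t) t :=
      (hc t htI).mono_of_mem_nhdsWithin hnb
    refine intervalIntegral.integral_hasDerivWithinAt_right (hii t htI) ?_ hcw
    exact ⟨Icc 0 1, hnb, hc.aestronglyMeasurable measurableSet_Icc⟩
  · intro t ht
    have htI := Ico_subset_Icc_self ht
    rw [norm_norm, add_zero, Real.norm_of_nonneg (hpos t htI)]
    exact hle t htI

lemma aux_qhDist_le {Ω : Set F} {x y : F} {γ : ℝ → F} (h : IsRectPath Ω x y γ) :
    qhDist Ω x y ≤ qhLength Ω γ := by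
  refine csInf_le ⟨0, ?_⟩ ⟨γ, h, rfl⟩
  rintro _ ⟨g, -, rfl⟩
  exact intervalIntegral.integral_nonneg zero_le_one fun u _ =>
    div_nonneg (norm_nonneg _) infDist_nonneg

lemma aux_main {Ω : Set F} (hopen : IsOpen Ω) (hconv : Convex ℝ Ω) (hproper : Ω ≠ univ)
    {x y : F} {σ₁ σ₂ : ℝ → F} (h₁ : IsRectPath Ω x y σ₁) (h₂ : IsRectPath Ω x y σ₂) {L : ℝ}
    (hL : L = qhDist Ω x y)
    (hd₁ : ∀ t ∈ Ioo (0:ℝ) 1, ‖deriv σ₁ t‖ ≤ L * infDist (σ₁ t) (frontier Ω))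
    (hd₂ : ∀ t ∈ Ioo (0:ℝ) 1, ‖deriv σ₂ t‖ ≤ L * infDist (σ₂ t) (frontier Ω)) :
    ∀ t ∈ Icc (0:ℝ) 1, σ₁ t = σ₂ t := by
  obtain ⟨⟨K₁, hK₁⟩, hm₁, h10, h11⟩ := h₁
  obtain ⟨⟨K₂, hK₂⟩, hm₂, h20, h21⟩ := h₂
  have hL0 : 0 ≤ L := by
    rw [hL]
    refine Real.sInf_nonneg ?_
    rintro _ ⟨g, -, rfl⟩
    exact intervalIntegral.integral_nonneg zero_le_one fun u _ =>
      div_nonneg (norm_nonneg _) infDist_nonneg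
  set γ : ℝ → F := fun t => (1/2 : ℝ) • (σ₁ t + σ₂ t) with hγ
  have hmγ : MapsTo γ (Icc 0 1) Ω := by
    intro t ht
    have := hconv (hm₁ ht) (hm₂ ht) (a := 1/2) (b := 1/2) (by norm_num) (by norm_num) (by norm_num)
    rwa [← smul_add] at this
  obtain ⟨K, hK⟩ : ∃ K : NNReal, LipschitzOnWith K γ (Icc 0 1) := by
    have := (lipschitzWith_smul (β := F) (1/2 : ℝ)).lipschitzOnWith (s := univ) |>.comp
      (hK₁.add hK₂) (mapsTo_univ _ _)
    exact ⟨_, this⟩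
  have hrect : IsRectPath Ω x y γ := by
    refine ⟨⟨K, hK⟩, hmγ, ?_, ?_⟩
    · simp only [hγ, h10, h20]; module
    · simp only [hγ, h11, h21]; module
  have hlen : L ≤ qhLength Ω γ := hL ▸ aux_qhDist_le hrect
  have hdc : ContinuousOn (fun t => (infDist (γ t) (frontier Ω))⁻¹) (Icc 0 1) :=
    ((continuous_infDist_pt _).comp_continuousOn hK.continuousOn).inv₀
      fun t ht => (aux_pos_s14 hopen hproper (hmγ ht)).ne'
  have hint := aux_int hK hdc le_rfl zero_le_one le_rfl
  simp only [← div_eq_mul_inv] at hint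
  -- pointwise derivative
  have hder : ∀ t, DifferentiableAt ℝ σ₁ t → DifferentiableAt ℝ σ₂ t →
      deriv γ t = (1/2 : ℝ) • (deriv σ₁ t + deriv σ₂ t) := fun t e₁ e₂ =>
    ((e₁.hasDerivAt.add e₂.hasDerivAt).const_smul (1/2 : ℝ)).deriv
  have hbound : ∀ t ∈ Ioo (0:ℝ) 1, DifferentiableAt ℝ σ₁ t → DifferentiableAt ℝ σ₂ t →
      ‖deriv γ t‖ / infDist (γ t) (frontier Ω) ≤ L := by
    intro t ht e₁ e₂
    have htI := Ioo_subset_Icc_self ht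
    rw [div_le_iff₀ (aux_pos_s14 hopen hproper (hmγ htI)), hder t e₁ e₂, norm_smul]
    have := aux_concave_s14 hopen hconv hproper (hm₁ htI) (hm₂ htI)
    have h4 := mul_le_mul_of_nonneg_left this hL0
    have h5 := norm_add_le (deriv σ₁ t) (deriv σ₂ t)
    have h6 := hd₁ t ht
    have h7 := hd₂ t ht
    have h8 : ‖(1/2 : ℝ)‖ = 1/2 := by norm_num
    rw [h8]
    simp only [hγ]
    linarith
  have hae : ∀ᵐ t, t ∈ Ioc (0:ℝ) 1 → ‖deriv γ t‖ / infDist (γ t) (frontier Ω) = L := by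
    have hle : (fun t => ‖deriv γ t‖ / infDist (γ t) (frontier Ω))
        ≤ᵐ[volume.restrict (Ioc 0 1)] (fun _ => L) := by
      rw [EventuallyLE, ae_restrict_iff' measurableSet_Ioc]
      filter_upwards [aux_ae hK₁, aux_ae hK₂] with t e₁ e₂ ht
      exact hbound t (e₁ ht).1 (e₁ ht).2 (e₂ ht).2
    rw [intervalIntegrable_iff_integrableOn_Ioc_of_le zero_le_one] at hint
    have hconst : Integrable (fun _ : ℝ => L) (volume.restrict (Ioc (0:ℝ) 1)) :=
      integrable_const _
    have heq := (integral_eq_iff_of_ae_le hint hconst hle).1 ?_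
    · rwa [EventuallyEq, ae_restrict_iff' measurableSet_Ioc] at heq
    · have hc : ∫ _ in Ioc (0:ℝ) 1, L = L := by simp
      refine le_antisymm (integral_mono_ae hint hconst hle) ?_
      rw [hc, ← intervalIntegral.integral_of_le zero_le_one]
      exact hlen
  have hfin := aux_gronwall (hK₁.sub hK₂) (f := fun t => σ₁ t - σ₂ t) (L := L)
    (by simp [h10, h20]) ?_
  · exact fun t ht => sub_eq_zero.1 (hfin t ht)
  filter_upwards [hae, aux_ae hK₁, aux_ae hK₂] with t e e₁ e₂ ht
  have e := e ht
  obtain ⟨hI, e₁⟩ := e₁ ht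
  obtain ⟨-, e₂⟩ := e₂ ht
  have htI := Ioo_subset_Icc_self hI
  have hp := aux_pos_s14 hopen hproper (hmγ htI)
  rw [div_eq_iff hp.ne', hder t e₁ e₂, norm_smul] at e
  have h8 : ‖(1/2 : ℝ)‖ = 1/2 := by norm_num
  rw [h8] at e
  have h4 := mul_le_mul_of_nonneg_left
    (aux_concave_s14 hopen hconv hproper (hm₁ htI) (hm₂ htI)) hL0
  have h5 := norm_add_le (deriv σ₁ t) (deriv σ₂ t)
  have h6 := hd₁ t hI
  have h7 := hd₂ t hI
  simp only [hγ] at e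
  have hray : ‖deriv σ₁ t + deriv σ₂ t‖ = ‖deriv σ₁ t‖ + ‖deriv σ₂ t‖ := by linarith
  have n₁ : ‖deriv σ₁ t‖ = L * infDist (σ₁ t) (frontier Ω) := by linarith
  have n₂ : ‖deriv σ₂ t‖ = L * infDist (σ₂ t) (frontier Ω) := by linarith
  have hds : deriv (fun t => σ₁ t - σ₂ t) t = deriv σ₁ t - deriv σ₂ t :=
    (e₁.hasDerivAt.sub e₂.hasDerivAt).deriv
  rw [hds, sameRay_iff_norm_sub.1 (sameRay_iff_norm_add.2 hray), n₁, n₂, ← mul_sub, abs_mul,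
    abs_of_nonneg hL0, ← dist_eq_norm]
  refine mul_le_mul_of_nonneg_left ?_ hL0
  have := (lipschitz_infDist_pt (frontier Ω)).dist_le_mul (σ₁ t) (σ₂ t)
  rwa [Real.dist_eq, NNReal.coe_one, one_mul] at this

end helpers

/-- in a convex proper subdomain of `ℝⁿ`, quasihyperbolic geodesics are
unique: any two rectifiable arcs from `x` to `y` realizing the quasihyperbolic
distance have the same image. -/
theorem qh_geodesic_unique_of_convex_domain (n : ℕ) (hn : 2 ≤ n)
    (Ω : Set (EuclideanSpace ℝ (Fin n)))
    (hopen : IsOpen Ω) (hne : Ω.Nonempty) (hconv : Convex ℝ Ω) (hproper : Ω ≠ univ)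
    (x y : EuclideanSpace ℝ (Fin n)) (hx : x ∈ Ω) (hy : y ∈ Ω)
    (γ₁ γ₂ : ℝ → EuclideanSpace ℝ (Fin n))
    (h₁ : IsRectPath Ω x y γ₁) (h₂ : IsRectPath Ω x y γ₂)
    (hinj₁ : InjOn γ₁ (Icc 0 1)) (hinj₂ : InjOn γ₂ (Icc 0 1))
    (hlen₁ : qhLength Ω γ₁ = qhDist Ω x y) (hlen₂ : qhLength Ω γ₂ = qhDist Ω x y) :
    γ₁ '' Icc 0 1 = γ₂ '' Icc 0 1 := by
  obtain ⟨σ₁, hσ₁, him₁, hd₁⟩ := aux_reparam hopen hproper h₁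
  obtain ⟨σ₂, hσ₂, him₂, hd₂⟩ := aux_reparam hopen hproper h₂
  rw [hlen₁] at hd₁
  rw [hlen₂] at hd₂
  rw [← him₁, ← him₂]
  exact Set.image_congr (aux_main hopen hconv hproper hσ₁ hσ₂ rfl hd₁ hd₂)
end

section
/- Let X be a real Banach space, Ω ⊊ X a domain (open connected nonempty proper subset), and j the distance ratio metric on Ω. Then for every x₀ ∈ Ω and every r ∈ (0, log 2], the j-ball B_j(x₀,r) is starlike with respect to x₀. -/
open Set Metric MeasureTheory

/-- in any domain of a real Banach space, `j`-balls are starlike with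
respect to their center for radii `r ≤ log 2`. -/
theorem j_ball_starlike_banach (X : Type*) [NormedAddCommGroup X] [NormedSpace ℝ X]
    [CompleteSpace X] (Ω : Set X)
    (hopen : IsOpen Ω) (hconn : IsConnected Ω) (hproper : Ω ≠ univ)
    (x₀ : X) (hx₀ : x₀ ∈ Ω) (r : ℝ) (hr0 : 0 < r) (hr : r ≤ Real.log 2) :
    StarConvex ℝ x₀ (jBall Ω x₀ r) := by
  have hfr : (frontier Ω).Nonempty := nonempty_frontier_iff.2 ⟨⟨x₀, hx₀⟩, hproper⟩
  have hpos : ∀ z ∈ Ω, 0 < infDist z (frontier Ω) := by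
    intro z hz
    refine (isClosed_frontier.notMem_iff_infDist_pos hfr).1 ?_
    intro h
    rw [hopen.frontier_eq] at h
    exact h.2 hz
  have hball : ∀ z, dist x₀ z < infDist x₀ (frontier Ω) → z ∈ Ω := by
    intro z hz
    by_contra hzn
    have hc : IsPreconnected (ball x₀ (infDist x₀ (frontier Ω))) :=
      (convex_ball _ _).isPreconnected
    have hd : ∀ w ∈ ball x₀ (infDist x₀ (frontier Ω)), w ∉ frontier Ω := by
      intro w hw hwf
      have := infDist_le_dist_of_mem (x := x₀) hwf
      rw [mem_ball'] at hw
      linarith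
    have hcl : ∀ w ∈ ball x₀ (infDist x₀ (frontier Ω)), w ∉ Ω → w ∉ closure Ω := by
      intro w hw hwn hwc
      apply hd w hw
      rw [hopen.frontier_eq]
      exact ⟨hwc, hwn⟩
    have hzb : z ∈ ball x₀ (infDist x₀ (frontier Ω)) := by rwa [mem_ball']
    obtain ⟨w, -, hw1, hw2⟩ := hc Ω (closure Ω)ᶜ hopen isClosed_closure.isOpen_compl
      (fun w hw => by
        by_cases h : w ∈ Ω
        · exact Or.inl h
        · exact Or.inr (hcl w hw h))
      ⟨x₀, mem_ball_self (hpos x₀ hx₀), hx₀⟩ ⟨z, hzb, hcl z hzb hzn⟩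
    exact hw2 (subset_closure hw1)
  have key : ∀ z ∈ Ω, (jDist Ω x₀ z < r ↔
      dist x₀ z < (Real.exp r - 1) * min (infDist x₀ (frontier Ω)) (infDist z (frontier Ω))) := by
    intro z hz
    have hm : 0 < min (infDist x₀ (frontier Ω)) (infDist z (frontier Ω)) :=
      lt_min (hpos _ hx₀) (hpos _ hz)
    unfold jDist
    rw [Real.log_lt_iff_lt_exp (by positivity), ← div_lt_iff₀ hm]
    constructor <;> intro h <;> linarith
  have hR1 : Real.exp r - 1 ≤ 1 := by
    have := Real.exp_le_exp.2 hr
    rw [Real.exp_log (by norm_num)] at this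
    linarith
  have hR0 : 0 < Real.exp r - 1 := by
    have := Real.add_one_lt_exp hr0.ne'
    linarith
  rintro y ⟨hy, hyr⟩ a b ha hb hab
  rw [key y hy, mul_min_of_nonneg _ _ hR0.le, lt_min_iff] at hyr
  obtain ⟨h1, h2⟩ := hyr
  have hd1 : dist x₀ (a • x₀ + b • y) = b * dist x₀ y := by
    have : x₀ - (a • x₀ + b • y) = b • (x₀ - y) := by
      obtain rfl : a = 1 - b := by linarith
      module
    rw [dist_eq_norm, this, norm_smul, Real.norm_of_nonneg hb, dist_eq_norm]
  have hd2 : dist y (a • x₀ + b • y) = a * dist x₀ y := by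
    have : y - (a • x₀ + b • y) = a • (y - x₀) := by
      obtain rfl : a = 1 - b := by linarith
      module
    rw [dist_eq_norm, this, norm_smul, Real.norm_of_nonneg ha, dist_comm, dist_eq_norm]
  have hD : 0 ≤ dist x₀ y := dist_nonneg
  have hlip := infDist_le_infDist_add_dist (s := frontier Ω) (x := y) (y := a • x₀ + b • y)
  have hbD : b * dist x₀ y ≤ dist x₀ y := mul_le_of_le_one_left hD (by linarith)
  have h0 := hpos x₀ hx₀
  have hz : a • x₀ + b • y ∈ Ω := by
    apply hball
    rw [hd1]
    nlinarith
  refine ⟨hz, ?_⟩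
  rw [key _ hz, mul_min_of_nonneg _ _ hR0.le, lt_min_iff, hd1]
  refine ⟨by linarith, ?_⟩
  rw [hd2] at hlip
  have e1 := mul_le_mul_of_nonneg_left hlip hR0.le
  have e2 : (Real.exp r - 1) * (a * dist x₀ y) ≤ a * dist x₀ y :=
    mul_le_of_le_one_left (by positivity) hR1
  have e3 : a * dist x₀ y + b * dist x₀ y = dist x₀ y := by rw [← add_mul, hab, one_mul]
  rw [mul_add] at e1
  linarith
end

section
/- Let Ω = ℝ² \ { e₁, −e₁ } ⊂ ℝ², where e₁ = (1,0), and let x = √3·e₂ = (0,√3). There exists ε₀ > 0 such that for every ε with 0 < ε < ε₀ the j-metric ball B_j(x, log(1+√3) + ε) is disconnected. -/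
open Set Metric MeasureTheory

abbrev PL := EuclideanSpace ℝ (Fin 2)

lemma aux_dist (x y : PL) : dist x y = Real.sqrt ((x 0 - y 0)^2 + (x 1 - y 1)^2) := by
  rw [EuclideanSpace.dist_eq]; simp [Fin.sum_univ_two, Real.dist_eq, sq_abs]

lemma aux_frontier (a b : PL) : frontier (({a, b} : Set PL)ᶜ) = {a, b} := by
  have hf : ({a, b} : Set PL).Finite := by simp
  rw [frontier_compl, hf.isClosed.frontier_eq]
  have : interior ({a, b} : Set PL) = ∅ := by
    rw [interior_eq_empty_iff_dense_compl]
    exact hf.countable.dense_compl ℝ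
  rw [this]; simp

lemma aux_real (a R : ℝ) (hR : R < 1.76) (D d1 d2 : ℝ) (hD : 0 ≤ D) (hd1 : 0 ≤ d1) (hd2 : 0 ≤ d2)
    (hDs : D^2 = a^2 + 27/4) (h1s : d1^2 = (a-1)^2+3/4) (h2s : d2^2 = (a+1)^2+3/4)
    (h0 : D < R * 2) (h1 : D < R * d1) (h2 : D < R * d2) : False := by
  have k0 : D < 1.76 * 2 := by nlinarith
  have k1 : D < 1.76 * d1 := by nlinarith
  have k2 : D < 1.76 * d2 := by nlinarith
  have s0 : D^2 < (1.76 * 2)^2 := by gcongr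
  have s1 : D^2 < (1.76 * d1)^2 := by gcongr
  have s2 : D^2 < (1.76 * d2)^2 := by gcongr
  rw [mul_pow, h1s, hDs] at s1
  rw [mul_pow, h2s, hDs] at s2
  rw [hDs] at s0
  norm_num at s0 s1 s2
  have u : a < 2.4 := by nlinarith
  have l : -2.4 < a := by nlinarith
  rcases le_total 0 a with h | h <;> nlinarith

set_option maxHeartbeats 2000000 in
/-- in `Ω = ℝ² \ {e₁, -e₁}` the `j`-metric ball centered at `√3·e₂` of
radius `log(1+√3) + ε` is disconnected for all sufficiently small `ε > 0`. -/
theorem j_ball_disconnected_example :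
    ∃ ε₀ > (0:ℝ), ∀ ε : ℝ, 0 < ε → ε < ε₀ →
      ¬ IsConnected
          (jBall
            ({EuclideanSpace.single 0 (1:ℝ),
                -EuclideanSpace.single 0 (1:ℝ)}ᶜ : Set (EuclideanSpace ℝ (Fin 2)))
            (Real.sqrt 3 • EuclideanSpace.single 1 (1:ℝ))
            (Real.log (1 + Real.sqrt 3) + ε)) := by
  have h3 : Real.sqrt 3 ^ 2 = 3 := Real.sq_sqrt (by norm_num)
  have h3p : 0 < Real.sqrt 3 := by positivity
  have h3l : Real.sqrt 3 < 1.76 := by nlinarith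
  refine ⟨Real.log (1 + 1.76) - Real.log (1 + Real.sqrt 3), ?_, ?_⟩
  · have := Real.log_lt_log (by positivity) (show 1 + Real.sqrt 3 < 1 + 1.76 by linarith)
    linarith
  intro ε hε hε' hconn
  have hpre := hconn.isPreconnected
  set e : PL := EuclideanSpace.single 0 (1:ℝ) with he
  set x : PL := Real.sqrt 3 • EuclideanSpace.single 1 (1:ℝ) with hx
  have e0 : e 0 = 1 := by simp [he]
  have e1 : e 1 = 0 := by simp [he]
  have x0 : x 0 = 0 := by simp [hx]
  have x1 : x 1 = Real.sqrt 3 := by simp [hx]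
  have hcl : IsClosed ({e, -e} : Set PL) := (Set.toFinite _).isClosed
  have hne : ({e, -e} : Set PL).Nonempty := ⟨e, by simp⟩
  have hs4 : Real.sqrt 4 = 2 := by
    rw [show (4:ℝ) = 2^2 by norm_num]; exact Real.sqrt_sq (by norm_num)
  have key : ∀ y : PL, y 0 = 0 → (y 1)^2 = 3 → infDist y ({e, -e} : Set PL) = 2 := by
    intro y hy0 hy1
    have d1 : dist y e = 2 := by
      rw [aux_dist, hy0, e0, e1, ← hs4]; congr 1; nlinarith
    have d2 : dist y (-e) = 2 := by
      rw [aux_dist, ← hs4]; simp only [PiLp.neg_apply, hy0, e0, e1]; congr 1; nlinarith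
    apply le_antisymm
    · rw [← d1]; exact infDist_le_dist_of_mem (by simp)
    · rw [le_infDist hne]
      intro z hz
      rcases hz with rfl | hz
      · exact d1.ge
      · rw [Set.mem_singleton_iff.1 hz]; exact d2.ge
  have hxd := key x x0 (by rw [x1, h3])
  have hmem : ∀ y : PL, infDist y ({e, -e} : Set PL) = 2 → y ∈ ({e, -e}ᶜ : Set PL) := by
    intro y hy
    rw [Set.mem_compl_iff, hcl.notMem_iff_infDist_pos hne, hy]; norm_num
  have hlogp : 0 < Real.log (1 + Real.sqrt 3) := Real.log_pos (by linarith)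
  have hxB : x ∈ jBall ({e, -e}ᶜ : Set PL) x (Real.log (1 + Real.sqrt 3) + ε) := by
    refine ⟨hmem x hxd, ?_⟩
    simp only [jDist, dist_self, zero_div, add_zero, Real.log_one]
    linarith
  set z : PL := -x with hz
  have z0 : z 0 = 0 := by simp [hz, x0]
  have z1 : z 1 = -Real.sqrt 3 := by simp [hz, x1]
  have hzd := key z z0 (by rw [z1, neg_sq, h3])
  have hzB : z ∈ jBall ({e, -e}ᶜ : Set PL) x (Real.log (1 + Real.sqrt 3) + ε) := by
    refine ⟨hmem z hzd, ?_⟩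
    have hd : dist x z = 2 * Real.sqrt 3 := by
      rw [aux_dist, x0, x1, z0, z1, ← Real.sqrt_sq (show 0 ≤ 2 * Real.sqrt 3 by positivity)]
      congr 1; ring
    rw [jDist, aux_frontier, hxd, hzd, hd, min_self, mul_div_cancel_left₀ _ (by norm_num)]
    linarith
  have hc : Continuous (fun y : PL => y 1) := by fun_prop
  obtain ⟨y, ⟨hyΩ, hyj⟩, hy1⟩ := hpre.intermediate_value hzB hxB hc.continuousOn
    (show -(Real.sqrt 3)/2 ∈ Icc (z 1) (x 1) by rw [z1, x1]; constructor <;> linarith)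
  simp only at hy1
  have hypos : 0 < infDist y ({e, -e} : Set PL) := (hcl.notMem_iff_infDist_pos hne).1 hyΩ
  rw [jDist, aux_frontier, hxd] at hyj
  have hm : 0 < min 2 (infDist y ({e, -e} : Set PL)) := lt_min (by norm_num) hypos
  have hq : dist x y / min 2 (infDist y ({e, -e} : Set PL)) < 1.76 := by
    have h1 := (Real.log_lt_log_iff (x := 1 + dist x y / min 2 (infDist y ({e, -e} : Set PL)))
      (y := 1 + 1.76) (by positivity) (by norm_num)).1 (by linarith)
    linarith
  obtain ⟨R, hR1, hR2⟩ := exists_between hq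
  have hR0 : 0 < R := lt_of_le_of_lt (by positivity) hR1
  rw [div_lt_iff₀ hm] at hR1
  have b0 := min_le_left 2 (infDist y ({e, -e} : Set PL))
  have b := min_le_right 2 (infDist y ({e, -e} : Set PL))
  have b1 := b.trans (infDist_le_dist_of_mem (show e ∈ ({e, -e} : Set PL) by simp))
  have b2 := b.trans (infDist_le_dist_of_mem (show -e ∈ ({e, -e} : Set PL) by simp))
  refine aux_real (y 0) R hR2 (dist x y) (dist y e) (dist y (-e)) dist_nonneg dist_nonneg
    dist_nonneg ?_ ?_ ?_ (hR1.trans_le (by gcongr)) (hR1.trans_le (by gcongr))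
    (hR1.trans_le (by gcongr))
  · rw [aux_dist, Real.sq_sqrt (by positivity), x0, x1, hy1]; nlinarith
  · rw [aux_dist, Real.sq_sqrt (by positivity), e0, e1, hy1]; nlinarith
  · rw [aux_dist, Real.sq_sqrt (by positivity)]
    simp only [PiLp.neg_apply, e0, e1, hy1]; nlinarith
end
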